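/- arXiv:2401.08489 — 2 statements merged into one kernel-verified Lean document; each statement's English description precedes it below -/
import Mathlib

section
/- Let 𝔤 be the simple complex Lie algebra of type G₂, with short simple root α₁ and long simple root α₂. Let μ and ν be dominant integral weights with β := ν̄ − μ a root. If either (a) ⟨μ, α₁∨⟩ = 0 and β = −(α₁ + α₂) or β = 2α₁ + α₂, or (b) ⟨μ, α₁∨⟩ = 1 and β = α₁ + α₂ or β = −(2α₁ + α₂), then the 𝔤-invariant subspace of adj(𝔤) ⊗ V_μ ⊗ V_ν is zero. -/
open scoped TensorProduct Classical
open LieAlgebra LieModule Module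

namespace AdjPaper

variable {L : Type} [LieRing L] [LieAlgebra ℂ L]

/-- `χ` is a root of `L` relative to the Cartan subalgebra `H`: a nonzero linear functional
on `H` with nontrivial root space. -/
def IsRoot (H : LieSubalgebra ℂ L) [H.IsCartanSubalgebra] (χ : Module.Dual ℂ H) : Prop :=
  χ ≠ 0 ∧ rootSpace H ⇑χ ≠ ⊥

/-- `t` is the coroot `χ∨` of the root `χ`: it lies in `⁅𝔤_χ, 𝔤_{-χ}⁆` and satisfies
`χ t = 2`. -/
def IsCoroot (H : LieSubalgebra ℂ L) [H.IsCartanSubalgebra] (χ : Module.Dual ℂ H) (t : H) : Prop :=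
  χ t = 2 ∧ ∃ e ∈ rootSpace H ⇑χ, ∃ f ∈ rootSpace H ⇑(-χ), (t : L) = ⁅e, f⁆

/-- `α` enumerates the simple roots of a base of the root system of `(L, H)`. -/
structure IsBase (H : LieSubalgebra ℂ L) [H.IsCartanSubalgebra] {r : ℕ} (α : Fin r → Module.Dual ℂ H) : Prop where
  isRoot : ∀ j, IsRoot H (α j)
  indep : LinearIndependent ℂ α
  pos_neg : ∀ χ : Module.Dual ℂ H, IsRoot H χ →
    (∃ c : Fin r → ℕ, χ = ∑ j, (c j : ℂ) • α j) ∨ (∃ c : Fin r → ℕ, χ = -∑ j, (c j : ℂ) • α j)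

/-- `χ` is a positive root relative to the base `α`. -/
def IsPosRoot (H : LieSubalgebra ℂ L) [H.IsCartanSubalgebra] {r : ℕ} (α : Fin r → Module.Dual ℂ H)
    (χ : Module.Dual ℂ H) : Prop :=
  IsRoot H χ ∧ ∃ c : Fin r → ℕ, χ = ∑ j, (c j : ℂ) • α j

/-- A weight `μ` is dominant integral: all its pairings `⟨μ, α_j∨⟩ = μ (hc j)` with the
simple coroots `hc j` are non-negative integers. -/
def IsDomInt {H : LieSubalgebra ℂ L} {r : ℕ} (hc : Fin r → H) (μ : Module.Dual ℂ H) : Prop :=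
  ∀ j, ∃ n : ℕ, μ (hc j) = (n : ℂ)

/-- `V` is an irreducible `L`-module with highest weight `μ` (relative to the Cartan
subalgebra `H` and the base `α`): it is irreducible and possesses a nonzero vector of
`H`-weight `μ` annihilated by all positive root spaces. -/
def IsHWIrrep (H : LieSubalgebra ℂ L) [H.IsCartanSubalgebra] {r : ℕ} (α : Fin r → Module.Dual ℂ H)
    (μ : Module.Dual ℂ H) (V : Type) [AddCommGroup V] [Module ℂ V]
    [LieRingModule L V] [LieModule ℂ L V] : Prop :=
  IsSimpleOrder (LieSubmodule ℂ L V) ∧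
  ∃ v : V, v ≠ 0 ∧ (∀ x : H, ⁅(x : L), v⁆ = μ x • v) ∧
    ∀ χ : Module.Dual ℂ H, IsPosRoot H α χ → ∀ e ∈ rootSpace H ⇑χ, ⁅e, v⁆ = 0

/-- `W` is isomorphic to the dual representation `V*`: there is a nondegenerate
`𝔤`-invariant pairing `W × V → ℂ`. -/
def IsDualPair (W V : Type) [AddCommGroup W] [Module ℂ W] [LieRingModule L W]
    [AddCommGroup V] [Module ℂ V] [LieRingModule L V] : Prop :=
  ∃ B : W →ₗ[ℂ] V →ₗ[ℂ] ℂ,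
    (∀ w, (∀ v, B w v = 0) → w = 0) ∧ (∀ v, (∀ w, B w v = 0) → v = 0) ∧
    ∀ (x : L) (w : W) (v : V), B ⁅x, w⁆ v + B w ⁅x, v⁆ = 0

/-- `V` is an orthogonal representation: it has a nondegenerate invariant symmetric
bilinear form. -/
def IsOrthogonalRep (V : Type) [AddCommGroup V] [Module ℂ V] [LieRingModule L V] : Prop :=
  ∃ B : V →ₗ[ℂ] V →ₗ[ℂ] ℂ,
    (∀ v w, B v w = B w v) ∧ (∀ v, (∀ w, B v w = 0) → v = 0) ∧
    ∀ (x : L) (v w : V), B ⁅x, v⁆ w + B v ⁅x, w⁆ = 0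

/-- `V` is a symplectic representation: it has a nondegenerate invariant alternating
bilinear form. -/
def IsSymplecticRep (V : Type) [AddCommGroup V] [Module ℂ V] [LieRingModule L V] : Prop :=
  ∃ B : V →ₗ[ℂ] V →ₗ[ℂ] ℂ,
    (∀ v, B v v = 0) ∧ (∀ v, (∀ w, B v w = 0) → v = 0) ∧
    ∀ (x : L) (v w : V), B ⁅x, v⁆ w + B v ⁅x, w⁆ = 0

variable (L) in
/-- The operator on `adj(𝔤) ⊗ V ⊗ V` exchanging the two copies of `V`. -/
noncomputable def swapMap (V : Type) [AddCommGroup V] [Module ℂ V] :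
    (L ⊗[ℂ] (V ⊗[ℂ] V)) →ₗ[ℂ] (L ⊗[ℂ] (V ⊗[ℂ] V)) :=
  LinearMap.lTensor L (TensorProduct.comm ℂ V V).toLinearMap

variable (L) in
/-- The `𝔤`-invariant subspace of `adj(𝔤) ⊗ S²V`, realised inside `adj(𝔤) ⊗ V ⊗ V` as the
invariant vectors fixed by the swap of the two copies of `V`. -/
noncomputable def symSquareInvariants (V : Type) [AddCommGroup V] [Module ℂ V]
    [LieRingModule L V] [LieModule ℂ L V] : Submodule ℂ (L ⊗[ℂ] (V ⊗[ℂ] V)) :=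
  (maxTrivSubmodule ℂ L (L ⊗[ℂ] (V ⊗[ℂ] V)) : Submodule ℂ (L ⊗[ℂ] (V ⊗[ℂ] V))) ⊓
    LinearMap.ker (swapMap L V - LinearMap.id)

variable (L) in
/-- The `𝔤`-invariant subspace of `adj(𝔤) ⊗ Λ²V`, realised inside `adj(𝔤) ⊗ V ⊗ V` as the
invariant vectors anti-fixed by the swap of the two copies of `V`. -/
noncomputable def altSquareInvariants (V : Type) [AddCommGroup V] [Module ℂ V]
    [LieRingModule L V] [LieModule ℂ L V] : Submodule ℂ (L ⊗[ℂ] (V ⊗[ℂ] V)) :=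
  (maxTrivSubmodule ℂ L (L ⊗[ℂ] (V ⊗[ℂ] V)) : Submodule ℂ (L ⊗[ℂ] (V ⊗[ℂ] V))) ⊓
    LinearMap.ker (swapMap L V + LinearMap.id)


/-- Abstract triangular decomposition data, graded by the element `h`. -/
structure Tri (h : L) (Pos Neg Car : Set L) : Prop where
  span : Submodule.span ℂ (Pos ∪ Neg ∪ Car) = ⊤
  pos : ∀ e ∈ Pos, ∃ n : ℕ, 1 ≤ n ∧ ⁅h, e⁆ = (n : ℂ) • e
  neg : ∀ f ∈ Neg, ∃ n : ℕ, 1 ≤ n ∧ ⁅h, f⁆ = -(n : ℂ) • f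
  car : ∀ x ∈ Car, ⁅h, x⁆ = 0

section abstract_part

variable {V : Type} [AddCommGroup V] [Module ℂ V] [LieRingModule L V] [LieModule ℂ L V]
variable {h : L} {Pos Neg Car : Set L}

lemma Tri.eq_top (T : Tri h Pos Neg Car) (hV : IsSimpleOrder (LieSubmodule ℂ L V))
    (P : Submodule ℂ V) (s : V) (hs0 : s ≠ 0) (hsP : s ∈ P)
    (hP : ∀ y ∈ Neg ∪ Car, ∀ w ∈ P, ⁅y, w⁆ ∈ P) (hpos : ∀ e ∈ Pos, ⁅e, s⁆ = 0) : P = ⊤ := by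
  let C : Set (Submodule ℂ V) := {Q | s ∈ Q ∧ ∀ y ∈ Neg ∪ Car, ∀ w ∈ Q, ⁅y, w⁆ ∈ Q}
  let N : Submodule ℂ V := sInf C
  have hsN : s ∈ N := by
    rw [Submodule.mem_sInf]; exact fun Q hQ => hQ.1
  have hNst : ∀ y ∈ Neg ∪ Car, ∀ w ∈ N, ⁅y, w⁆ ∈ N := by
    intro y hy w hw
    rw [Submodule.mem_sInf] at hw ⊢
    exact fun Q hQ => hQ.2 y hy w (hw Q hQ)
  let N' : Submodule ℂ V :=
    { carrier := {w | w ∈ N ∧ ∀ y : L, ⁅y, w⁆ ∈ N}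
      zero_mem' := by simp
      add_mem' := by
        rintro a b ⟨ha, ha'⟩ ⟨hb, hb'⟩
        exact ⟨N.add_mem ha hb, fun y => by rw [lie_add]; exact N.add_mem (ha' y) (hb' y)⟩
      smul_mem' := by
        rintro c a ⟨ha, ha'⟩
        exact ⟨N.smul_mem c ha, fun y => by rw [lie_smul]; exact N.smul_mem c (ha' y)⟩ }
  have hN' : N' ∈ C := by
    refine ⟨⟨hsN, fun y => ?_⟩, ?_⟩
    · have hy : y ∈ Submodule.span ℂ (Pos ∪ Neg ∪ Car) := by rw [T.span]; trivial
      induction hy using Submodule.span_induction with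
      | zero => simp
      | add u v _ _ h1 h2 => rw [add_lie]; exact N.add_mem h1 h2
      | smul c u _ h1 => rw [smul_lie]; exact N.smul_mem c h1
      | mem u hu =>
        rcases hu with (hu | hu) | hu
        · rw [hpos u hu]; exact N.zero_mem
        · exact hNst u (Or.inl hu) s hsN
        · exact hNst u (Or.inr hu) s hsN
    · rintro y hy w ⟨hw, hw'⟩
      refine ⟨hw' y, fun z => ?_⟩
      rw [leibniz_lie]
      exact N.add_mem (hw' _) (hNst y hy _ (hw' z))
  have hle : N ≤ N' := sInf_le hN'
  let M : LieSubmodule ℂ L V := { N with lie_mem := fun {x m} hm => (hle hm).2 x }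
  have hM : M = ⊤ := by
    rcases hV.eq_bot_or_eq_top M with hb | ht
    · exfalso
      have : s ∈ M := hsN
      rw [hb] at this
      exact hs0 (by simpa using this)
    · exact ht
  have hNP : N ≤ P := sInf_le ⟨hsP, hP⟩
  rw [eq_top_iff]
  intro w _
  apply hNP
  have : w ∈ M := by rw [hM]; trivial
  exact this

/-- Eigenspaces of `h`. -/
noncomputable abbrev Eig (V : Type) [AddCommGroup V] [Module ℂ V] [LieRingModule L V]
    [LieModule ℂ L V] (h : L) (a : ℂ) : Submodule ℂ V := (toEnd ℂ L V h).eigenspace a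

lemma mem_Eig {a : ℂ} {v : V} : v ∈ Eig V h a ↔ ⁅h, v⁆ = a • v := by
  rw [Eig, Module.End.mem_eigenspace_iff, toEnd_apply_apply]

lemma lie_mem_Eig {a b : ℂ} {x : L} {v : V} (hx : ⁅h, x⁆ = b • x) (hv : v ∈ Eig V h a) :
    ⁅x, v⁆ ∈ Eig V h (a + b) := by
  rw [mem_Eig] at hv ⊢
  rw [leibniz_lie, hx, hv, smul_lie, lie_smul, ← add_smul, add_comm]

lemma lie_mem_iSup {ι : Type} (a : ι → ℂ) (P : Submodule ℂ V) (x : L)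
    (hx : ∀ i, ∀ v ∈ Eig V h (a i), ⁅x, v⁆ ∈ P) (w : V) (hw : w ∈ ⨆ i, Eig V h (a i)) :
    ⁅x, w⁆ ∈ P := by
  have : (⨆ i, Eig V h (a i)) ≤ P.comap (toEnd ℂ L V x) := iSup_le fun i v hv => hx i v hv
  exact this hw

lemma not_mem_iSup {ι : Type} (a : ι → ℂ) (b : ℂ) (hb : ∀ i, a i ≠ b) (v : V)
    (hv : v ∈ Eig V h b) (hv' : v ∈ ⨆ i, Eig V h (a i)) : v = 0 := by
  have hd := (toEnd ℂ L V h).eigenspaces_iSupIndep b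
  rw [Submodule.disjoint_def] at hd
  refine hd v hv ?_
  have : (⨆ i, Eig V h (a i)) ≤ ⨆ j, ⨆ (_ : j ≠ b), (toEnd ℂ L V h).eigenspace j :=
    iSup_le fun i => le_iSup₂_of_le (a i) (hb i) le_rfl
  exact this hv'

lemma Tri.eq_top_weak (T : Tri h Pos Neg Car) (hV : IsSimpleOrder (LieSubmodule ℂ L V))
    (s : V) (a : ℂ) (hs0 : s ≠ 0) (hs : s ∈ Eig V h a) (hpos : ∀ e ∈ Pos, ⁅e, s⁆ = 0) :
    (⨆ k : ℕ, Eig V h (a - k)) = ⊤ := by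
  refine T.eq_top hV _ s hs0 ?_ ?_ hpos
  · exact Submodule.mem_iSup_of_mem 0 (by simpa using hs)
  · rintro y (hy | hy) w hw
    · obtain ⟨n, _, hn⟩ := T.neg y hy
      refine lie_mem_iSup (fun k : ℕ => a - (k : ℂ)) _ y (fun k v hv => ?_) w hw
      refine Submodule.mem_iSup_of_mem (k + n) ?_
      convert lie_mem_Eig hn hv using 2
      push_cast; ring
    · have hn : ⁅h, y⁆ = (0 : ℂ) • y := by rw [T.car y hy, zero_smul]
      refine lie_mem_iSup (fun k : ℕ => a - (k : ℂ)) _ y (fun k v hv => ?_) w hw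
      refine Submodule.mem_iSup_of_mem k ?_
      convert lie_mem_Eig hn hv using 2
      ring

lemma Tri.eq_top_strong (T : Tri h Pos Neg Car) (hV : IsSimpleOrder (LieSubmodule ℂ L V))
    (s : V) (a : ℂ) (hs0 : s ≠ 0) (hs : s ∈ Eig V h a) (hpos : ∀ e ∈ Pos, ⁅e, s⁆ = 0)
    (hcar : ∀ x ∈ Car, ∃ c : ℂ, ⁅x, s⁆ = c • s) :
    (Submodule.span ℂ {s} ⊔ ⨆ k : ℕ, Eig V h (a - (k + 1))) = ⊤ := by
  refine T.eq_top hV _ s hs0 ?_ ?_ hpos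
  · exact Submodule.mem_sup_left (Submodule.mem_span_singleton_self s)
  · rintro y (hy | hy) w hw
    · obtain ⟨n, hn1, hn⟩ := T.neg y hy
      obtain ⟨w1, hw1, w2, hw2, rfl⟩ := Submodule.mem_sup.1 hw
      obtain ⟨c, rfl⟩ := Submodule.mem_span_singleton.1 hw1
      rw [lie_add, lie_smul]
      refine Submodule.mem_sup_right (Submodule.add_mem _ (Submodule.smul_mem _ _ ?_) ?_)
      · refine Submodule.mem_iSup_of_mem (n - 1) ?_
        convert lie_mem_Eig hn hs using 2
        push_cast [hn1]; ring
      · refine lie_mem_iSup (fun k : ℕ => a - ((k : ℂ) + 1)) _ y (fun k v hv => ?_) w2 hw2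
        refine Submodule.mem_iSup_of_mem (k + n) ?_
        convert lie_mem_Eig hn hv using 2
        push_cast; ring
    · have hn : ⁅h, y⁆ = (0 : ℂ) • y := by rw [T.car y hy, zero_smul]
      obtain ⟨w1, hw1, w2, hw2, rfl⟩ := Submodule.mem_sup.1 hw
      obtain ⟨c, rfl⟩ := Submodule.mem_span_singleton.1 hw1
      rw [lie_add, lie_smul]
      refine Submodule.add_mem _ (Submodule.smul_mem _ _ (Submodule.mem_sup_left ?_))
        (Submodule.mem_sup_right ?_)
      · obtain ⟨d, hd⟩ := hcar y hy
        rw [hd]; exact Submodule.smul_mem _ _ (Submodule.mem_span_singleton_self s)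
      · refine lie_mem_iSup (fun k : ℕ => a - ((k : ℂ) + 1)) _ y (fun k v hv => ?_) w2 hw2
        refine Submodule.mem_iSup_of_mem k ?_
        convert lie_mem_Eig hn hv using 2
        ring

/-- The lowest weight functional. -/
lemma Tri.exists_functional (T : Tri h Pos Neg Car) (hV : IsSimpleOrder (LieSubmodule ℂ L V))
    (s : V) (a : ℂ) (hs0 : s ≠ 0) (hs : s ∈ Eig V h a) (hpos : ∀ e ∈ Pos, ⁅e, s⁆ = 0)
    (hcar : ∀ x ∈ Car, ∃ c : ℂ, ⁅x, s⁆ = c • s) :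
    ∃ ξ : V →ₗ[ℂ] ℂ, ξ s ≠ 0 ∧ (∀ f ∈ Neg, ∀ w, ξ ⁅f, w⁆ = 0) ∧
      ∀ x ∈ Car, ∀ c : ℂ, ⁅x, s⁆ = c • s → ∀ w, ξ ⁅x, w⁆ = c * ξ w := by
  have htop := T.eq_top_strong hV s a hs0 hs hpos hcar
  have hnot : s ∉ ⨆ k : ℕ, Eig V h (a - (k + 1)) := fun hc =>
    hs0 (not_mem_iSup (fun k : ℕ => a - ((k : ℂ) + 1)) a (fun k hk => by
      have : (k : ℂ) + 1 = 0 := by linear_combination -hk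
      exact Nat.cast_add_one_ne_zero k this) s hs hc)
  obtain ⟨ξ, h1, h2⟩ := Submodule.exists_le_ker_of_notMem hnot
  refine ⟨ξ, h1, fun f hf w => ?_, fun x hx c hc w => ?_⟩
  · obtain ⟨n, hn1, hn⟩ := T.neg f hf
    have hw : w ∈ (Submodule.span ℂ {s} ⊔ ⨆ k : ℕ, Eig V h (a - (k + 1))) := by
      rw [htop]; trivial
    obtain ⟨w1, hw1, w2, hw2, rfl⟩ := Submodule.mem_sup.1 hw
    obtain ⟨c, rfl⟩ := Submodule.mem_span_singleton.1 hw1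
    rw [← LinearMap.mem_ker]
    apply h2
    rw [lie_add, lie_smul]
    refine (Submodule.add_mem _ (Submodule.smul_mem _ _ ?_) ?_)
    · refine Submodule.mem_iSup_of_mem (n - 1) ?_
      convert lie_mem_Eig hn hs using 2
      push_cast [hn1]; ring
    · refine lie_mem_iSup (fun k : ℕ => a - ((k : ℂ) + 1)) _ f (fun k v hv => ?_) w2 hw2
      refine Submodule.mem_iSup_of_mem (k + n) ?_
      convert lie_mem_Eig hn hv using 2
      push_cast; ring
  · have hw : w ∈ (Submodule.span ℂ {s} ⊔ ⨆ k : ℕ, Eig V h (a - (k + 1))) := by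
      rw [htop]; trivial
    have hn : ⁅h, x⁆ = (0 : ℂ) • x := by rw [T.car x hx, zero_smul]
    obtain ⟨w1, hw1, w2, hw2, rfl⟩ := Submodule.mem_sup.1 hw
    obtain ⟨d, rfl⟩ := Submodule.mem_span_singleton.1 hw1
    have e1 : ξ w2 = 0 := h2 hw2
    have e2 : ξ ⁅x, w2⁆ = 0 := by
      refine h2 (lie_mem_iSup (fun k : ℕ => a - ((k : ℂ) + 1)) _ x (fun k v hv => ?_) w2 hw2)
      refine Submodule.mem_iSup_of_mem k ?_
      convert lie_mem_Eig hn hv using 2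
      ring
    rw [lie_add, lie_smul, hc, map_add, map_add, e1, e2]
    simp only [map_smul, smul_eq_mul]; ring

/-- Every nonzero subspace stable under the positive part contains the highest weight vector. -/
lemma Tri.hw_mem [FiniteDimensional ℂ V] (T : Tri h Pos Neg Car)
    (hV : IsSimpleOrder (LieSubmodule ℂ L V))
    (s : V) (a : ℂ) (hs0 : s ≠ 0) (hs : s ∈ Eig V h a) (hpos : ∀ e ∈ Pos, ⁅e, s⁆ = 0)
    (hcar : ∀ x ∈ Car, ∃ c : ℂ, ⁅x, s⁆ = c • s)
    (S : Submodule ℂ V) (hS : S ≠ ⊥) (hSpos : ∀ e ∈ Pos, ∀ w ∈ S, ⁅e, w⁆ ∈ S)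
    (hSh : ∀ w ∈ S, ⁅h, w⁆ ∈ S) : s ∈ S := by
  have htop := T.eq_top_weak hV s a hs0 hs hpos
  have hall : ∀ (c : ℂ) (w : V), w ≠ 0 → w ∈ Eig V h c → ∃ n : ℕ, c = a - n := by
    intro c w hw0 hw
    by_contra hcon
    push Not at hcon
    refine hw0 (not_mem_iSup (fun k : ℕ => a - (k : ℂ)) c (fun i hi => hcon i hi.symm) w hw ?_)
    rw [htop]; trivial
  have hex : ∃ n : ℕ, ∃ w ∈ S, w ≠ 0 ∧ w ∈ Eig V h (a - n) := by
    have : Nontrivial S := Submodule.nontrivial_iff_ne_bot.2 hS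
    let g : Module.End ℂ S := (toEnd ℂ L V h).restrict hSh
    obtain ⟨c, hc⟩ := Module.End.exists_eigenvalue g
    obtain ⟨w, hw⟩ := hc.exists_hasEigenvector
    have hw1 : (w : V) ∈ Eig V h c := by
      rw [mem_Eig]
      have := congrArg Subtype.val hw.apply_eq_smul
      exact this
    have hw0 : (w : V) ≠ 0 := by simpa using hw.2
    obtain ⟨n, rfl⟩ := hall c w hw0 hw1
    exact ⟨n, w, w.2, hw0, hw1⟩
  obtain ⟨w, hwS, hw0, hwE⟩ := Nat.find_spec hex
  have hmin := fun m (hm : m < Nat.find hex) => Nat.find_min hex hm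
  generalize Nat.find hex = n at hwE hmin
  have hwpos : ∀ e ∈ Pos, ⁅e, w⁆ = 0 := by
    intro e he
    by_contra hne
    obtain ⟨k, hk1, hk⟩ := T.pos e he
    have hE := lie_mem_Eig hk hwE
    obtain ⟨m, hm⟩ := hall _ _ hne hE
    have hnm : m + k = n := by
      have : ((m + k : ℕ) : ℂ) = (n : ℂ) := by push_cast; linear_combination hm
      exact_mod_cast this
    refine hmin m (by omega) ⟨_, hSpos e he w hwS, hne, ?_⟩
    rw [← hm]; exact hE
  have htop2 := T.eq_top_weak hV w _ hw0 hwE hwpos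
  have hn0 : n = 0 := by
    by_contra hn
    refine hs0 (not_mem_iSup (fun k : ℕ => (a - (n : ℂ)) - (k : ℂ)) a (fun i hi => ?_) s hs ?_)
    · have : ((n + i : ℕ) : ℂ) = 0 := by push_cast; linear_combination -hi
      have : n + i = 0 := by exact_mod_cast this
      omega
    · rw [htop2]; trivial
  subst hn0
  have htop3 := T.eq_top_strong hV s a hs0 hs hpos hcar
  have hw : w ∈ (Submodule.span ℂ {s} ⊔ ⨆ k : ℕ, Eig V h (a - (k + 1))) := by
    rw [htop3]; trivial
  obtain ⟨w1, hw1, w2, hw2, rfl⟩ := Submodule.mem_sup.1 hw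
  obtain ⟨d, rfl⟩ := Submodule.mem_span_singleton.1 hw1
  have hw2E : w2 ∈ Eig V h a := by
    have h1 : d • s + w2 ∈ Eig V h a := by simpa using hwE
    have := Submodule.sub_mem _ h1 (Submodule.smul_mem _ d hs)
    simpa using this
  have hw20 : w2 = 0 := not_mem_iSup (fun k : ℕ => a - ((k : ℂ) + 1)) a (fun k hk => by
      have : (k : ℂ) + 1 = 0 := by linear_combination -hk
      exact Nat.cast_add_one_ne_zero k this) w2 hw2E hw2
  rw [hw20, add_zero] at hw0 hwS
  have hd : d ≠ 0 := fun hd => hw0 (by rw [hd, zero_smul])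
  exact (Submodule.smul_mem_iff S hd).1 hwS

/-- Contraction of the second factor. -/
noncomputable def con2 (A : Type) [AddCommGroup A] [Module ℂ A] (ξ : V →ₗ[ℂ] ℂ) :
    (A ⊗[ℂ] V) →ₗ[ℂ] A := (TensorProduct.rid ℂ A).toLinearMap ∘ₗ LinearMap.lTensor A ξ

/-- Contraction of the first factor. -/
noncomputable def con1 (A : Type) [AddCommGroup A] [Module ℂ A] (θ : A →ₗ[ℂ] ℂ) :
    (A ⊗[ℂ] V) →ₗ[ℂ] V := (TensorProduct.lid ℂ V).toLinearMap ∘ₗ LinearMap.rTensor V θ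

@[simp] lemma con2_tmul (A : Type) [AddCommGroup A] [Module ℂ A] (ξ : V →ₗ[ℂ] ℂ) (x : A) (v : V) :
    con2 A ξ (x ⊗ₜ v) = ξ v • x := by simp [con2]

@[simp] lemma con1_tmul (A : Type) [AddCommGroup A] [Module ℂ A] (θ : A →ₗ[ℂ] ℂ) (x : A) (v : V) :
    con1 A θ (x ⊗ₜ v) = θ x • v := by simp [con1]

lemma con1_injective (A : Type) [AddCommGroup A] [Module ℂ A] [FiniteDimensional ℂ A]
    (u : A ⊗[ℂ] V) (hu : ∀ θ, con1 A θ u = 0) : u = 0 := by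
  let b := Module.finBasis ℂ A
  have key : ∀ u : A ⊗[ℂ] V, u = ∑ i, b i ⊗ₜ[ℂ] (con1 A (b.coord i) u) := by
    intro u
    induction u using TensorProduct.induction_on with
    | zero => simp
    | add x y hx hy =>
      simp only [map_add, TensorProduct.tmul_add, Finset.sum_add_distrib]
      rw [← hx, ← hy]
    | tmul x v =>
      simp only [con1_tmul, TensorProduct.tmul_smul]
      simp only [TensorProduct.smul_tmul', ← TensorProduct.sum_tmul]
      congr 1
      exact (b.sum_repr x).symm
  rw [key u]
  simp [hu]

lemma con2_injective (A : Type) [AddCommGroup A] [Module ℂ A] [FiniteDimensional ℂ V]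
    (B : Type) [AddCommGroup B] [Module ℂ B]
    (u : B ⊗[ℂ] (A ⊗[ℂ] V)) (hu : ∀ ξ : V →ₗ[ℂ] ℂ, LinearMap.lTensor B (con2 A ξ) u = 0) :
    u = 0 := by
  let b := Module.finBasis ℂ V
  have key0 : ∀ u : A ⊗[ℂ] V, u = ∑ i, (con2 A (b.coord i) u) ⊗ₜ[ℂ] b i := by
    intro u
    induction u using TensorProduct.induction_on with
    | zero => simp
    | add x y hx hy =>
      simp only [map_add, TensorProduct.add_tmul, Finset.sum_add_distrib]
      rw [← hx, ← hy]
    | tmul x v =>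
      simp only [con2_tmul, TensorProduct.smul_tmul]
      simp only [← TensorProduct.tmul_sum]
      congr 1
      exact (b.sum_repr v).symm
  have key : ∀ u : B ⊗[ℂ] (A ⊗[ℂ] V), u = ∑ i, LinearMap.lTensor B
      ((TensorProduct.mk ℂ A V).flip (b i)) (LinearMap.lTensor B (con2 A (b.coord i)) u) := by
    intro u
    induction u using TensorProduct.induction_on with
    | zero => simp
    | add x y hx hy =>
      simp only [map_add, Finset.sum_add_distrib]
      rw [← hx, ← hy]
    | tmul x v =>
      simp only [LinearMap.lTensor_tmul, ← TensorProduct.tmul_sum, LinearMap.flip_apply,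
        TensorProduct.mk_apply]
      rw [← key0 v]
  rw [key u]
  simp [hu]

lemma con1_lie (θ : L →ₗ[ℂ] ℂ) (x : L) (u : L ⊗[ℂ] V) :
    con1 L θ ⁅x, u⁆ = ⁅x, con1 L θ u⁆ - con1 L ⁅x, θ⁆ u := by
  induction u using TensorProduct.induction_on with
  | zero => simp
  | add a b ha hb => simp only [lie_add, map_add, ha, hb]; abel
  | tmul a v => simp [TensorProduct.LieModule.lie_tmul_right, add_comm]

lemma con2_lie (ξ : V →ₗ[ℂ] ℂ) (x : L) (u : L ⊗[ℂ] V) :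
    con2 L ξ ⁅x, u⁆ = ⁅x, con2 L ξ u⁆ - con2 L ⁅x, ξ⁆ u := by
  induction u using TensorProduct.induction_on with
  | zero => simp
  | add a b ha hb => simp only [lie_add, map_add, ha, hb]; abel
  | tmul a v => simp [TensorProduct.LieModule.lie_tmul_right]

lemma con_comm (A : Type) [AddCommGroup A] [Module ℂ A] (θ : A →ₗ[ℂ] ℂ) (ξ : V →ₗ[ℂ] ℂ)
    (u : A ⊗[ℂ] V) : θ (con2 A ξ u) = ξ (con1 A θ u) := by
  induction u using TensorProduct.induction_on with
  | zero => simp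
  | add a b ha hb => simp only [map_add, ha, hb]
  | tmul a v => simp [mul_comm]

/-- Highest weight vectors in `L ⊗ V` are detected by contraction with the functional `ξ`. -/
lemma Tri.con2_ne_zero [FiniteDimensional ℂ V] [FiniteDimensional ℂ L] (T : Tri h Pos Neg Car)
    (hV : IsSimpleOrder (LieSubmodule ℂ L V))
    (s : V) (a : ℂ) (hs0 : s ≠ 0) (hs : s ∈ Eig V h a) (hpos : ∀ e ∈ Pos, ⁅e, s⁆ = 0)
    (hcar : ∀ x ∈ Car, ∃ c : ℂ, ⁅x, s⁆ = c • s)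
    (ξ : V →ₗ[ℂ] ℂ) (hξ : ξ s ≠ 0)
    (u : L ⊗[ℂ] V) (hu0 : u ≠ 0) (hupos : ∀ e ∈ Pos, ⁅e, u⁆ = 0) (c : ℂ) (huh : ⁅h, u⁆ = c • u) :
    con2 L ξ u ≠ 0 := by
  intro h0
  let Φ : (L →ₗ[ℂ] ℂ) →ₗ[ℂ] V :=
    { toFun := fun θ => con1 L θ u
      map_add' := fun x y => by simp [con1, LinearMap.rTensor_add]
      map_smul' := fun x y => by simp [con1, LinearMap.rTensor_smul] }
  have hmem : s ∈ LinearMap.range Φ := by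
    refine T.hw_mem hV s a hs0 hs hpos hcar _ ?_ ?_ ?_
    · intro hb
      refine hu0 (con1_injective L u fun θ => ?_)
      have : Φ θ ∈ LinearMap.range Φ := ⟨θ, rfl⟩
      rw [hb] at this
      exact (Submodule.mem_bot ℂ).1 this
    · rintro e he w ⟨θ, rfl⟩
      refine ⟨⁅e, θ⁆, ?_⟩
      have := con1_lie θ e u
      rw [hupos e he, map_zero] at this
      exact (sub_eq_zero.1 this.symm).symm
    · rintro w ⟨θ, rfl⟩
      refine ⟨⁅h, θ⁆ + c • θ, ?_⟩
      have := con1_lie θ h u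
      rw [huh, map_smul] at this
      rw [map_add, map_smul]
      change con1 L ⁅h, θ⁆ u + c • con1 L θ u = ⁅h, con1 L θ u⁆
      rw [this]; abel
  obtain ⟨θ, hθ⟩ := hmem
  have := con_comm L θ ξ u
  rw [h0, map_zero] at this
  apply hξ
  rw [← hθ]
  exact this.symm

end abstract_part

section G2_part

variable [FiniteDimensional ℂ L] [LieAlgebra.IsSimple ℂ L]
variable (H : LieSubalgebra ℂ L) [H.IsCartanSubalgebra]

lemma lie_rs {χ : Module.Dual ℂ H} {x : L} (hx : x ∈ rootSpace H ⇑χ) (t : H) :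
    ⁅(t : L), x⁆ = χ t • x :=
  LieAlgebra.IsKilling.lie_eq_smul_of_mem_rootSpace hx t

lemma lie_mem_rs {χ ψ ω : Module.Dual ℂ H} {x y : L} (hx : x ∈ rootSpace H ⇑χ)
    (hy : y ∈ rootSpace H ⇑ψ) (hω : ω = χ + ψ) : ⁅x, y⁆ ∈ rootSpace H ⇑ω := by
  subst hω
  exact LieAlgebra.lie_mem_genWeightSpace_of_mem_genWeightSpace hx hy

lemma rs_one_dim {χ : Module.Dual ℂ H} (hχ : χ ≠ 0) {x y : L} (hx : x ∈ rootSpace H ⇑χ)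
    (hy : y ∈ rootSpace H ⇑χ) (hy0 : y ≠ 0) : ∃ c : ℂ, x = c • y := by
  have hne : rootSpace H ⇑χ ≠ ⊥ := by
    intro hb
    rw [hb] at hy
    exact hy0 (by simpa using hy)
  let w : Weight ℂ H L := ⟨⇑χ, hne⟩
  have hw : w.IsNonZero := by
    intro hz
    apply hχ
    have : ⇑w = 0 := hz
    ext t
    exact congrFun this t
  have h1 := LieAlgebra.IsKilling.finrank_rootSpace_eq_one w hw
  obtain ⟨c, hc⟩ := (finrank_eq_one_iff_of_nonzero' (⟨y, hy⟩ : rootSpace H ⇑χ)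
    (by simpa using hy0)).1 h1 ⟨x, hx⟩
  exact ⟨c, (congrArg Subtype.val hc).symm⟩

lemma mem_rs_of {χ : Module.Dual ℂ H} {x : L} (hx : ∀ t : H, ⁅(t : L), x⁆ = χ t • x) :
    x ∈ rootSpace H ⇑χ := by
  refine LieModule.weightSpace_le_genWeightSpace L (⇑χ : H → ℂ) ?_
  rw [LieModule.mem_weightSpace]
  exact hx

variable {H}
variable (α : Fin 2 → Module.Dual ℂ H) (hc : Fin 2 → H)

/-- Positive root vectors. -/
def PosSet : Set L := {e | ∃ χ, IsPosRoot H α χ ∧ e ∈ rootSpace H ⇑χ}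

/-- Negative root vectors. -/
def NegSet : Set L := {f | ∃ χ, IsRoot H χ ∧ (∃ c : Fin 2 → ℕ, χ = -∑ j, (c j : ℂ) • α j) ∧
  f ∈ rootSpace H ⇑χ}

variable {α hc}

lemma tri_of (hbase : IsBase H α) (t : H) (h0 : α 0 t = 1) (h1 : α 1 t = 1) :
    Tri (t : L) (PosSet α) (NegSet α) (H : Set L) where
  span := by
    have key : ∀ y : L, y ∈ (⨆ χ : Weight ℂ H L, rootSpace H ⇑χ) →
        y ∈ Submodule.span ℂ (PosSet α ∪ NegSet α ∪ (H : Set L)) := by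
      intro y hy
      refine LieSubmodule.iSup_induction (fun χ : Weight ℂ H L => rootSpace H ⇑χ)
        (motive := fun y => y ∈ Submodule.span ℂ (PosSet α ∪ NegSet α ∪ (H : Set L))) hy ?_ ?_ ?_
      · intro w x hx
        by_cases hw : w.IsZero
        · have hw' : ⇑w = 0 := hw
          rw [hw', LieAlgebra.rootSpace_zero_eq] at hx
          exact Submodule.subset_span (Or.inr hx)
        · have hroot : IsRoot H (Weight.toLinear ℂ H L w) := by
            refine ⟨fun hz => hw ?_, w.genWeightSpace_ne_bot⟩
            funext z
            exact LinearMap.congr_fun hz z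
          rcases hbase.pos_neg _ hroot with hp | hn
          · exact Submodule.subset_span (Or.inl (Or.inl ⟨_, ⟨hroot, hp⟩, hx⟩))
          · exact Submodule.subset_span (Or.inl (Or.inr ⟨_, hroot, hn, hx⟩))
      · exact Submodule.zero_mem _
      · intro a b ha hb
        exact Submodule.add_mem _ ha hb
    rw [eq_top_iff]
    intro y _
    apply key
    rw [LieModule.iSup_genWeightSpace_eq_top' ℂ H L]
    trivial
  pos := by
    rintro e ⟨χ, ⟨hr, c, hχ⟩, he⟩
    refine ⟨c 0 + c 1, ?_, ?_⟩
    · by_contra hcon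
      have h0 : c 0 = 0 := by omega
      have h1 : c 1 = 0 := by omega
      exact hr.1 (by rw [hχ]; simp [Fin.sum_univ_two, h0, h1])
    · rw [lie_rs H he t]
      congr 1
      rw [hχ]; simp [Fin.sum_univ_two, h0, h1]
  neg := by
    rintro e ⟨χ, hr, ⟨c, hχ⟩, he⟩
    refine ⟨c 0 + c 1, ?_, ?_⟩
    · by_contra hcon
      have h0 : c 0 = 0 := by omega
      have h1 : c 1 = 0 := by omega
      exact hr.1 (by rw [hχ]; simp [Fin.sum_univ_two, h0, h1])
    · rw [lie_rs H he t]
      congr 1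
      rw [hχ]; simp [Fin.sum_univ_two, h0, h1]
  car := by
    intro x hx
    have : ⁅t, (⟨x, hx⟩ : H)⁆ = 0 := LieModule.IsTrivial.trivial _ _
    exact congrArg Subtype.val this

lemma sl2_of {χ : Module.Dual ℂ H} {t : H} {e f : L} (h2 : χ t = 2) (he : e ∈ rootSpace H ⇑χ)
    (hf : f ∈ rootSpace H ⇑(-χ)) (ht : (t : L) = ⁅e, f⁆) : IsSl2Triple (t : L) e f where
  h_ne_zero := by
    intro h0
    have : t = 0 := Subtype.ext h0
    rw [this] at h2
    simp at h2
  lie_e_f := ht.symm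
  lie_h_e_nsmul := by rw [lie_rs H he t, h2, two_smul, two_smul]
  lie_h_f_nsmul := by
    rw [lie_rs H hf t, LinearMap.neg_apply, h2, neg_smul, two_smul, two_smul]

/-- Combinations with mixed signs have trivial root space. -/
lemma rs_mixed (hbase : IsBase H α) (t0 t1 : H) (h00 : α 0 t0 = 1) (h10 : α 1 t0 = 0)
    (h01 : α 0 t1 = 0) (h11 : α 1 t1 = 1) (χ : Module.Dual ℂ H) (hχ0 : χ t0 ≠ 0)
    (hχ : χ t0 + χ t1 = 0) {x : L} (hx : x ∈ rootSpace H ⇑χ) : x = 0 := by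
  by_contra hx0
  have hr : IsRoot H χ := by
    refine ⟨fun h => hχ0 (by rw [h]; rfl), fun hb => hx0 ?_⟩
    rw [hb] at hx
    simpa using hx
  rcases hbase.pos_neg χ hr with ⟨c, rfl⟩ | ⟨c, rfl⟩
  · simp [Fin.sum_univ_two, h00, h10, h01, h11] at hχ hχ0
    have : c 0 + c 1 = 0 := by exact_mod_cast hχ
    omega
  · simp [Fin.sum_univ_two, h00, h10, h01, h11] at hχ hχ0
    have hh : (c 0 : ℂ) + c 1 = 0 := by linear_combination -hχ
    have : c 0 + c 1 = 0 := by exact_mod_cast hh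
    omega

/-- The upper part of the `α₀`-string ending at `-α₁`. -/
lemma string_neg {h0 e0 f0 y : L} (T : IsSl2Triple h0 e0 f0)
    (P : T.HasPrimitiveVectorWith y (3 : ℂ)) (c : ℂ) (hc : c ≠ 0) :
    ⁅e0, c • ⁅f0, y⁆⁆ ≠ 0 ∧ ⁅e0, ⁅e0, c • ⁅f0, ⁅f0, y⁆⁆⁆⁆ ≠ 0 := by
  have h1 := P.lie_e_pow_succ_toEnd_f 0
  have h2 := P.lie_e_pow_succ_toEnd_f 1
  have hy := P.ne_zero
  simp [pow_succ] at h1 h2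
  constructor
  · rw [lie_smul, h1]
    simp [hc, hy]
  · rw [lie_smul, h2, lie_smul, lie_smul, h1]
    simp only [ne_eq, smul_eq_zero, hc, hy, not_or]
    norm_num

/-- The `α₀`-string starting at `α₁`. -/
lemma string_pos {h0 e0 f0 z : L} (T : IsSl2Triple h0 e0 f0)
    (P : T.symm.HasPrimitiveVectorWith z (3 : ℂ)) (c : ℂ) (hc : c ≠ 0) :
    ⁅e0, c • ⁅e0, ⁅e0, z⁆⁆⁆ ≠ 0 ∧ ⁅e0, ⁅e0, c • ⁅e0, z⁆⁆⁆ ≠ 0 := by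
  have h3 := P.pow_toEnd_f_ne_zero_of_eq_nat (n := 3) (by norm_num) (i := 3) le_rfl
  simp [pow_succ] at h3
  simp [lie_smul, hc, h3]

/-- The key vanishing: no nonzero root vector in the relevant root space is annihilated. -/
lemma key_ne (hbase : IsBase H α) (hcoroot : ∀ j, IsCoroot H (α j) (hc j))
    (hG2short : α 1 (hc 0) = -3)
    (t0 t1 : H) (h00 : α 0 t0 = 1) (h10 : α 1 t0 = 0)
    (h01 : α 0 t1 = 0) (h11 : α 1 t1 = 1) {e0 f0 : L} (he0 : e0 ∈ rootSpace H ⇑(α 0))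
    (hf0 : f0 ∈ rootSpace H ⇑(-α 0)) (T : IsSl2Triple (hc 0 : L) e0 f0)
    (β : Module.Dual ℂ H) {x : L} (hx : x ∈ rootSpace H ⇑β) (hx0 : x ≠ 0) :
    ((β = -(α 0 + α 1) ∨ β = (2 : ℂ) • α 0 + α 1) → ⁅e0, x⁆ ≠ 0) ∧
    ((β = α 0 + α 1 ∨ β = -((2 : ℂ) • α 0 + α 1)) → ⁅e0, ⁅e0, x⁆⁆ ≠ 0) := by
  obtain ⟨h2, e1, he1, f1, hf1, hef⟩ := hcoroot 1
  have T1 := sl2_of h2 he1 hf1 hef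
  have Py : T.HasPrimitiveVectorWith f1 (3 : ℂ) :=
    { ne_zero := T1.f_ne_zero
      lie_h := by rw [lie_rs H hf1, LinearMap.neg_apply, hG2short, neg_neg]
      lie_e := rs_mixed hbase t0 t1 h00 h10 h01 h11 (α 0 + -α 1) (by simp [h00, h10])
        (by simp [h00, h10, h01, h11]) (lie_mem_rs H he0 hf1 rfl) }
  have Pz : T.symm.HasPrimitiveVectorWith e1 (3 : ℂ) :=
    { ne_zero := T1.e_ne_zero
      lie_h := by rw [neg_lie, lie_rs H he1, hG2short, ← neg_smul, neg_neg]
      lie_e := rs_mixed hbase t0 t1 h00 h10 h01 h11 (-α 0 + α 1) (by simp [h00, h10])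
        (by simp [h00, h10, h01, h11]) (lie_mem_rs H hf0 he1 rfl) }
  have hcne : ∀ (c : ℂ) (y : L), x = c • y → c ≠ 0 := by
    rintro c y hxy rfl
    exact hx0 (by rw [hxy, zero_smul])
  have n1 := (string_neg T Py 1 one_ne_zero)
  have n2 := (string_pos T Pz 1 one_ne_zero)
  have nz : ∀ ψ : Module.Dual ℂ H, ψ t1 ≠ 0 → ψ ≠ 0 := by
    rintro ψ hψ rfl
    exact hψ rfl
  refine ⟨?_, ?_⟩
  · rintro (rfl | rfl)
    · obtain ⟨c, hcx⟩ := rs_one_dim H (nz _ (by simp [h01, h11])) hx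
        (lie_mem_rs H hf0 hf1 (by abel)) (fun h => n1.1 (by rw [h]; simp))
      rw [hcx]
      exact (string_neg T Py c (hcne _ _ hcx)).1
    · obtain ⟨c, hcx⟩ := rs_one_dim H (nz _ (by simp [h01, h11])) hx
        (lie_mem_rs H he0 (lie_mem_rs H he0 he1 rfl) (by rw [two_smul]; abel))
        (fun h => n2.1 (by rw [h]; simp))
      rw [hcx]
      exact (string_pos T Pz c (hcne _ _ hcx)).1
  · rintro (rfl | rfl)
    · obtain ⟨c, hcx⟩ := rs_one_dim H (nz _ (by simp [h01, h11])) hx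
        (lie_mem_rs H he0 he1 rfl) (fun h => n2.2 (by rw [h]; simp))
      rw [hcx]
      exact (string_pos T Pz c (hcne _ _ hcx)).2
    · obtain ⟨c, hcx⟩ := rs_one_dim H (nz _ (by simp [h01, h11])) hx
        (lie_mem_rs H hf0 (lie_mem_rs H hf0 hf1 rfl) (by rw [two_smul]; abel))
        (fun h => n1.2 (by rw [h]; simp))
      rw [hcx]
      exact (string_neg T Py c (hcne _ _ hcx)).2

/-- There is no highest weight vector of the given weight in `L ⊗ V`. -/
lemma no_hw (hbase : IsBase H α) (hcoroot : ∀ j, IsCoroot H (α j) (hc j))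
    (hG2short : α 1 (hc 0) = -3) (hG2long : α 0 (hc 1) = -1)
    (V : Type) [AddCommGroup V] [Module ℂ V] [LieRingModule L V]
    [LieModule ℂ L V] [FiniteDimensional ℂ V] (μ lam : Module.Dual ℂ H)
    (hV : IsHWIrrep H α μ V)
    (hcase :
      (μ (hc 0) = 0 ∧ (lam - μ = -(α 0 + α 1) ∨ lam - μ = (2 : ℂ) • α 0 + α 1)) ∨
      (μ (hc 0) = 1 ∧ (lam - μ = α 0 + α 1 ∨ lam - μ = -((2 : ℂ) • α 0 + α 1))))
    (u : L ⊗[ℂ] V) (hu : ∀ x : H, ⁅(x : L), u⁆ = lam x • u)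
    (hupos : ∀ e ∈ PosSet α, ⁅e, u⁆ = 0) : u = 0 := by
  by_contra hu0
  obtain ⟨h2, e0, he0, f0, hf0, hef⟩ := hcoroot 0
  have h2' := (hcoroot 1).1
  have T := sl2_of h2 he0 hf0 hef
  obtain ⟨t0, ht0⟩ : ∃ t : H, t = (2 : ℂ) • hc 0 + (3 : ℂ) • hc 1 := ⟨_, rfl⟩
  obtain ⟨t1, ht1⟩ : ∃ t : H, t = hc 0 + (2 : ℂ) • hc 1 := ⟨_, rfl⟩
  have h00 : α 0 t0 = 1 := by rw [ht0]; simp [h2, hG2long]; norm_num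
  have h10 : α 1 t0 = 0 := by rw [ht0]; simp [h2', hG2short]; norm_num
  have h01 : α 0 t1 = 0 := by rw [ht1]; simp [h2, hG2long]
  have h11 : α 1 t1 = 1 := by rw [ht1]; simp [h2', hG2short]; norm_num
  have Tr := tri_of hbase (t0 + t1) (by simp [h00, h01]) (by simp [h10, h11])
  obtain ⟨hsimp, s, hs0, hsw, hsp⟩ := hV
  have hs : s ∈ Eig V ((t0 + t1 : H) : L) (μ (t0 + t1)) := mem_Eig.2 (hsw _)
  have hpos : ∀ e ∈ PosSet α, ⁅e, s⁆ = 0 := by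
    rintro e ⟨χ, hχ, he⟩
    exact hsp χ hχ e he
  have hcar : ∀ x ∈ (H : Set L), ∃ c : ℂ, ⁅x, s⁆ = c • s := fun x hx => ⟨_, hsw ⟨x, hx⟩⟩
  obtain ⟨ξ, hξ, hξn, hξc⟩ := Tr.exists_functional hsimp s _ hs0 hs hpos hcar
  have hx0 : con2 L ξ u ≠ 0 :=
    Tr.con2_ne_zero hsimp s _ hs0 hs hpos hcar ξ hξ u hu0 hupos _ (hu _)
  have hξH : ∀ x : H, ⁅(x : L), ξ⁆ = -(μ x) • ξ := by
    intro x
    ext w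
    rw [Module.Dual.lie_apply, hξc x x.2 _ (hsw x) w]
    simp
  have hxβ : con2 L ξ u ∈ rootSpace H ⇑(lam - μ) := by
    apply mem_rs_of
    intro x
    have h1 := con2_lie ξ (x : L) u
    rw [hu x, hξH x, map_smul] at h1
    have h3 : con2 L (-(μ x) • ξ) u = -(μ x) • con2 L ξ u := by
      simp [con2, LinearMap.lTensor_smul, LinearMap.lTensor_neg]
    rw [h3] at h1
    rw [eq_sub_iff_add_eq, ← add_smul] at h1
    rw [← h1, LinearMap.sub_apply, sub_eq_add_neg]
  have he0pos : e0 ∈ PosSet α := by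
    refine ⟨α 0, ⟨hbase.isRoot 0, ![1, 0], by simp [Fin.sum_univ_two]⟩, he0⟩
  have hf0neg : f0 ∈ NegSet α := by
    refine ⟨-α 0, ⟨neg_ne_zero.2 (hbase.isRoot 0).1, fun hb => ?_⟩,
      ⟨![1, 0], by simp [Fin.sum_univ_two]⟩, hf0⟩
    rw [hb] at hf0
    exact T.f_ne_zero (by simpa using hf0)
  have hstep : ∀ η : V →ₗ[ℂ] ℂ, ⁅e0, con2 L η u⁆ = con2 L ⁅e0, η⁆ u := by
    intro η
    have h1 := con2_lie η e0 u
    rw [hupos e0 he0pos, map_zero] at h1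
    exact sub_eq_zero.1 h1.symm
  have hcon0 : con2 L (0 : V →ₗ[ℂ] ℂ) u = 0 := by simp [con2]
  have Pξ : T.symm.HasPrimitiveVectorWith ξ (μ (hc 0)) :=
    { ne_zero := fun h => hξ (by rw [h]; rfl)
      lie_h := by rw [neg_lie, hξH, neg_smul, neg_neg]
      lie_e := by
        ext w
        rw [Module.Dual.lie_apply, hξn f0 hf0neg w]
        simp }
  have hkey := key_ne hbase hcoroot hG2short t0 t1 h00 h10 h01 h11 he0 hf0 T _ hxβ hx0
  rcases hcase with ⟨hm, hβ⟩ | ⟨hm, hβ⟩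
  · refine hkey.1 hβ ?_
    have := Pξ.pow_toEnd_f_eq_zero_of_eq_nat (n := 0) (by simpa using hm)
    simp only [zero_add, pow_one, toEnd_apply_apply] at this
    rw [hstep, this, hcon0]
  · refine hkey.2 hβ ?_
    have := Pξ.pow_toEnd_f_eq_zero_of_eq_nat (n := 1) (by simpa using hm)
    simp only [pow_succ, pow_zero, one_mul, Module.End.mul_apply, toEnd_apply_apply] at this
    rw [hstep, hstep, this, hcon0]

end G2_part

/-- Equivariance of the contraction against an invariant pairing. -/
lemma con_equivariant {V N W : Type} [AddCommGroup V] [Module ℂ V] [LieRingModule L V]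
    [LieModule ℂ L V] [AddCommGroup N] [Module ℂ N] [LieRingModule L N] [LieModule ℂ L N]
    [AddCommGroup W] [Module ℂ W] [LieRingModule L W]
    (B : W →ₗ[ℂ] N →ₗ[ℂ] ℂ)
    (hB : ∀ (x : L) (w : W) (v : N), B ⁅x, w⁆ v + B w ⁅x, v⁆ = 0)
    (x : L) (w : W) (t : L ⊗[ℂ] (V ⊗[ℂ] N)) :
    LinearMap.lTensor L (con2 V (B w)) ⁅x, t⁆ =
      ⁅x, LinearMap.lTensor L (con2 V (B w)) t⁆ - LinearMap.lTensor L (con2 V (B ⁅x, w⁆)) t := by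
  induction t using TensorProduct.induction_on with
  | zero => simp
  | add a b ha hb => simp only [lie_add, map_add, ha, hb]; abel
  | tmul a p =>
    induction p using TensorProduct.induction_on with
    | zero => simp
    | add p q hp hq => simp only [TensorProduct.tmul_add, lie_add, map_add, hp, hq]; abel
    | tmul v n =>
      have h1 : B w ⁅x, n⁆ = - B ⁅x, w⁆ n := by linear_combination hB x w n
      simp only [TensorProduct.LieModule.lie_tmul_right, TensorProduct.tmul_add, map_add,
        LinearMap.lTensor_tmul, con2_tmul, h1, lie_smul, neg_smul, TensorProduct.tmul_neg]
      abel

/-- Cancellation cases for `G₂`.  Here `L` is a finite-dimensional simple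
complex Lie algebra whose root system has a base of two simple roots `α 0` (short) and
`α 1` (long) with Cartan pairings `⟨α 1, (α 0)∨⟩ = -3` and `⟨α 0, (α 1)∨⟩ = -1`, i.e. `L`
is of type `G₂`.  If `β := ν̄ - μ` is a root and either (a) `⟨μ, α₁∨⟩ = 0` and
`β = -(α₁ + α₂)` or `β = 2α₁ + α₂`, or (b) `⟨μ, α₁∨⟩ = 1` and `β = α₁ + α₂` or
`β = -(2α₁ + α₂)`, then the `𝔤`-invariant subspace of `adj(𝔤) ⊗ V_μ ⊗ V_ν` is zero. -/
theorem statement6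
    {L : Type} [LieRing L] [LieAlgebra ℂ L] [FiniteDimensional ℂ L]
    [LieAlgebra.IsSimple ℂ L]
    (H : LieSubalgebra ℂ L) [H.IsCartanSubalgebra]
    (α : Fin 2 → Module.Dual ℂ H) (hc : Fin 2 → H)
    (hbase : IsBase H α) (hcoroot : ∀ j, IsCoroot H (α j) (hc j))
    (hG2short : α 1 (hc 0) = -3) (hG2long : α 0 (hc 1) = -1)
    (μ ν νbar : Module.Dual ℂ H) (hμ : IsDomInt hc μ) (hν : IsDomInt hc ν)
    (Vμ : Type) [AddCommGroup Vμ] [Module ℂ Vμ] [LieRingModule L Vμ]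
    [LieModule ℂ L Vμ] [FiniteDimensional ℂ Vμ]
    (Vν : Type) [AddCommGroup Vν] [Module ℂ Vν] [LieRingModule L Vν]
    [LieModule ℂ L Vν] [FiniteDimensional ℂ Vν]
    (Wν : Type) [AddCommGroup Wν] [Module ℂ Wν] [LieRingModule L Wν]
    [LieModule ℂ L Wν] [FiniteDimensional ℂ Wν]
    (hVμ : IsHWIrrep H α μ Vμ) (hVν : IsHWIrrep H α ν Vν) (hWν : IsHWIrrep H α νbar Wν)
    (hdual : IsDualPair (L := L) Wν Vν)
    (hroot : IsRoot H (νbar - μ))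
    (hcase :
      (μ (hc 0) = 0 ∧ (νbar - μ = -(α 0 + α 1) ∨ νbar - μ = (2 : ℂ) • α 0 + α 1)) ∨
      (μ (hc 0) = 1 ∧ (νbar - μ = α 0 + α 1 ∨ νbar - μ = -((2 : ℂ) • α 0 + α 1)))) :
    maxTrivSubmodule ℂ L (L ⊗[ℂ] (Vμ ⊗[ℂ] Vν)) = ⊥ := by
  obtain ⟨B, hB1, hB2, hBinv⟩ := hdual
  obtain ⟨hWs, w0, hw00, hw0w, hw0p⟩ := hWν
  rw [eq_bot_iff]
  intro t ht
  rw [LieModule.mem_maxTrivSubmodule] at ht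
  rw [LieSubmodule.mem_bot]
  let φ : Wν →ₗ[ℂ] L ⊗[ℂ] Vμ :=
    { toFun := fun w => LinearMap.lTensor L (con2 Vμ (B w)) t
      map_add' := fun x y => by simp [con2, LinearMap.lTensor_add, LinearMap.comp_add]
      map_smul' := fun x y => by simp [con2, LinearMap.lTensor_smul, LinearMap.comp_smul] }
  have hφ : ∀ (x : L) (w : Wν), φ ⁅x, w⁆ = ⁅x, φ w⁆ := by
    intro x w
    have := con_equivariant B hBinv x w t
    rw [ht x, map_zero] at this
    exact (sub_eq_zero.1 this.symm).symm
  have hφ0 : φ w0 = 0 := by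
    refine no_hw hbase hcoroot hG2short hG2long Vμ μ νbar hVμ hcase _ (fun x => ?_) ?_
    · rw [← hφ, hw0w, map_smul]
    · rintro e ⟨χ, hχ, he⟩
      rw [← hφ, hw0p χ hχ e he, map_zero]
  let K : LieSubmodule ℂ L Wν :=
    { LinearMap.ker φ with
      lie_mem := fun {x m} hm => by
        have hm' : φ m = 0 := hm
        change φ ⁅x, m⁆ = 0
        rw [hφ, hm', lie_zero] }
  have hK : K = ⊤ := by
    rcases hWs.eq_bot_or_eq_top K with hb | htop
    · exfalso
      have : w0 ∈ K := hφ0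
      rw [hb] at this
      exact hw00 (by simpa using this)
    · exact htop
  have hall : ∀ w, φ w = 0 := by
    intro w
    have : w ∈ K := by rw [hK]; trivial
    exact this
  have hsurj : Function.Surjective B := by
    have hinj : Function.Injective B := by
      rw [injective_iff_map_eq_zero]
      exact fun w hw => hB1 w fun v => by rw [hw]; rfl
    have hinj2 : Function.Injective B.flip := by
      rw [injective_iff_map_eq_zero]
      exact fun v hv => hB2 v fun w => by
        have := LinearMap.congr_fun hv w
        simpa using this
    have d1 := LinearMap.finrank_le_finrank_of_injective hinj
    have d2 := LinearMap.finrank_le_finrank_of_injective hinj2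
    have e1 : finrank ℂ (Vν →ₗ[ℂ] ℂ) = finrank ℂ Vν := Subspace.dual_finrank_eq
    have e2 : finrank ℂ (Wν →ₗ[ℂ] ℂ) = finrank ℂ Wν := Subspace.dual_finrank_eq
    exact (LinearMap.injective_iff_surjective_of_finrank_eq_finrank (by omega)).1 hinj
  refine con2_injective Vμ L t fun ξ => ?_
  obtain ⟨w, rfl⟩ := hsurj ξ
  exact hall w

end AdjPaper
end

section
/- Let μ be a dominant integral weight of 𝔤 with μ ≠ μ̄ (i.e. V_μ is not self-dual). Then the 𝔤-invariant subspaces of adj(𝔤) ⊗ S²V_μ and of adj(𝔤) ⊗ Λ²V_μ are both zero. -/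
open scoped TensorProduct Classical
open LieAlgebra LieModule Module

namespace AdjPaper

variable {L : Type} [LieRing L] [LieAlgebra ℂ L]

/-! ### Triangular decompositions with a grading element -/

section Abstract

/-- A triangular decomposition `L = N + H + P`, graded by `R ∈ H`, with `2R` part of an
`sl₂`-triple (unless `R = 0`). -/
structure Tri_s7 (N : Submodule ℂ L) (H : LieSubalgebra ℂ L) (P : Submodule ℂ L) (R : L) : Prop where
  decomp : N ⊔ H.toSubmodule ⊔ P = ⊤
  memH : R ∈ H
  comm : ∀ x ∈ H, ∀ y ∈ H, ⁅x, y⁆ = 0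
  hN : N ≤ Submodule.span ℂ {x | ∃ k : ℕ, ⁅R, x⁆ = (-((k : ℂ) + 1)) • x}
  hP : P ≤ Submodule.span ℂ {x | ∃ k : ℕ, ⁅R, x⁆ = ((k : ℂ) + 1) • x}
  sl2 : R = 0 ∨ ∃ e ∈ P, ∃ f ∈ N, IsSl2Triple ((2 : ℂ) • R) e f

theorem Tri_s7.symm {N P : Submodule ℂ L} {H : LieSubalgebra ℂ L} {R : L} (t : Tri_s7 N H P R) :
    Tri_s7 P H N (-R) where
  decomp := by rw [← t.decomp]; ac_rfl
  memH := neg_mem t.memH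
  comm := t.comm
  hN := t.hP.trans (Submodule.span_mono (by
    rintro x ⟨k, hk⟩; exact ⟨k, by rw [neg_lie, hk, neg_smul]⟩))
  hP := t.hN.trans (Submodule.span_mono (by
    rintro x ⟨k, hk⟩; exact ⟨k, by rw [neg_lie, hk, neg_smul, neg_neg]⟩))
  sl2 := by
    rcases t.sl2 with h | ⟨e, he, f, hf, h⟩
    · left; simp [h]
    · right; exact ⟨f, hf, e, he, by simpa using h.symm⟩

variable {M : Type} [AddCommGroup M] [Module ℂ M] [LieRingModule L M] [LieModule ℂ L M]

theorem exists_eq_of_mem_iSup_eigenspace {E : Type} [AddCommGroup E] [Module ℂ E]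
    (f : Module.End ℂ E) {ι : Type} (g : ι → ℂ)
    {a : ℂ} {x : E} (hx0 : x ≠ 0) (hx : f x = a • x)
    (hx' : x ∈ ⨆ k, f.eigenspace (g k)) : ∃ k, a = g k := by
  by_contra! hne
  have hind := f.eigenspaces_iSupIndep a
  have hle : (⨆ k, f.eigenspace (g k)) ≤ ⨆ b, ⨆ (_ : b ≠ a), f.eigenspace b :=
    iSup_le fun k => le_iSup₂_of_le (g k) (hne k).symm le_rfl
  exact hx0 (Submodule.disjoint_def.mp hind x (Module.End.mem_eigenspace_iff.mpr hx) (hle hx'))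

/-- Highest weight vectors (relative to `H`, `P`). -/
structure IsHW (H : LieSubalgebra ℂ L) (P : Submodule ℂ L) (μ : Module.Dual ℂ H) (w : M) :
    Prop where
  ne : w ≠ 0
  wt : ∀ h : H, ⁅(h : L), w⁆ = μ h • w
  kill : ∀ p ∈ P, ⁅p, w⁆ = 0

/-- The smallest subspace containing `w` and closed under `N`. -/
def cyc (N : Submodule ℂ L) (w : M) : Submodule ℂ M :=
  sInf {S | w ∈ S ∧ ∀ x ∈ N, ∀ s ∈ S, ⁅x, s⁆ ∈ S}

theorem mem_cyc (N : Submodule ℂ L) (w : M) : w ∈ cyc N w := by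
  simp only [cyc, Submodule.mem_sInf]
  exact fun S hS => hS.1

theorem cyc_le {N : Submodule ℂ L} {w : M} {S : Submodule ℂ M} (h1 : w ∈ S)
    (h2 : ∀ x ∈ N, ∀ s ∈ S, ⁅x, s⁆ ∈ S) : cyc N w ≤ S :=
  sInf_le ⟨h1, h2⟩

theorem lie_mem_cyc {N : Submodule ℂ L} {w : M} {x : L} (hx : x ∈ N) {s : M}
    (hs : s ∈ cyc N w) : ⁅x, s⁆ ∈ cyc N w := by
  simp only [cyc, Submodule.mem_sInf] at hs ⊢
  exact fun S hS => hS.2 x hx s (hs S hS)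

variable {N P : Submodule ℂ L} {H : LieSubalgebra ℂ L} {R : L}

theorem Tri_s7.exists_decomp (t : Tri_s7 N H P R) (x : L) :
    ∃ n ∈ N, ∃ h ∈ H, ∃ p ∈ P, x = n + h + p := by
  have hx : x ∈ N ⊔ H.toSubmodule ⊔ P := by rw [t.decomp]; trivial
  obtain ⟨y, hy, p, hp, rfl⟩ := Submodule.mem_sup.mp hx
  obtain ⟨n, hn, h, hh, rfl⟩ := Submodule.mem_sup.mp hy
  exact ⟨n, hn, h, hh, p, hp, rfl⟩

theorem cyc_lie (t : Tri_s7 N H P R) {μ : Module.Dual ℂ H} {w : M} (hw : IsHW H P μ w)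
    (x : L) {s : M} (hs : s ∈ cyc N w) : ⁅x, s⁆ ∈ cyc N w := by
  let S' : Submodule ℂ M :=
    { carrier := {s | s ∈ cyc N w ∧ ∀ x : L, ⁅x, s⁆ ∈ cyc N w}
      add_mem' := by
        rintro a b ⟨ha, ha'⟩ ⟨hb, hb'⟩
        exact ⟨add_mem ha hb, fun x => by rw [lie_add]; exact add_mem (ha' x) (hb' x)⟩
      zero_mem' := ⟨zero_mem _, fun x => by rw [lie_zero]; exact zero_mem _⟩
      smul_mem' := by
        rintro c a ⟨ha, ha'⟩
        exact ⟨Submodule.smul_mem _ c ha, fun x => by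
          rw [lie_smul]; exact Submodule.smul_mem _ c (ha' x)⟩ }
  suffices h : cyc N w ≤ S' from (h hs).2 x
  refine cyc_le ⟨mem_cyc N w, fun x => ?_⟩ ?_
  · obtain ⟨n, hn, h, hh, p, hp, rfl⟩ := t.exists_decomp x
    have h1 : ⁅h, w⁆ = μ ⟨h, hh⟩ • w := hw.wt ⟨h, hh⟩
    rw [add_lie, add_lie, hw.kill p hp, h1, add_zero]
    exact add_mem (lie_mem_cyc hn (mem_cyc N w)) (Submodule.smul_mem _ _ (mem_cyc N w))
  · rintro n hn s ⟨hs, hs'⟩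
    refine ⟨lie_mem_cyc hn hs, fun x => ?_⟩
    rw [leibniz_lie]
    exact add_mem (hs' _) (lie_mem_cyc hn (hs' x))

/-- The Lie submodule generated by a highest weight vector. -/
def cycLie (t : Tri_s7 N H P R) {μ : Module.Dual ℂ H} {w : M} (hw : IsHW H P μ w) :
    LieSubmodule ℂ L M :=
  { cyc N w with lie_mem := fun {x _} hs => cyc_lie t hw x hs }

theorem mem_cycLie (t : Tri_s7 N H P R) {μ : Module.Dual ℂ H} {w : M} (hw : IsHW H P μ w) {x : M} :
    x ∈ cycLie t hw ↔ x ∈ cyc N w := Iff.rfl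

/-- The part of `M` of degree `< m`. -/
def low (R : L) (m : ℂ) : Submodule ℂ M :=
  ⨆ k : ℕ, (toEnd ℂ L M R).eigenspace (m - ((k : ℂ) + 1))

theorem cyc_le_low (t : Tri_s7 N H P R) {μ : Module.Dual ℂ H} {w : M} (hw : IsHW H P μ w) :
    cyc N w ≤ (ℂ ∙ w) ⊔ low R (μ ⟨R, t.memH⟩) := by
  set m := μ ⟨R, t.memH⟩ with hm
  have hRw : ⁅R, w⁆ = m • w := hw.wt ⟨R, t.memH⟩
  refine cyc_le (Submodule.mem_sup_left (Submodule.mem_span_singleton_self w)) ?_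
  intro x hx s hs
  refine Submodule.mem_sup_right ?_
  -- reduce to homogeneous `x`
  have key : ∀ (k : ℕ) (x : L), ⁅R, x⁆ = (-((k : ℂ) + 1)) • x → ∀ s ∈ (ℂ ∙ w) ⊔ low R m,
      ⁅x, s⁆ ∈ (low R m : Submodule ℂ M) := by
    intro k x hx s hs
    have shift : ∀ (a : ℂ) (y : M), ⁅R, y⁆ = a • y → ⁅R, ⁅x, y⁆⁆ = (a - (k + 1)) • ⁅x, y⁆ := by
      intro a y hy
      rw [leibniz_lie, hx, hy, lie_smul, smul_lie, ← add_smul]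
      congr 1; ring
    have hsub : (ℂ ∙ w) ⊔ low R m ≤ (low R m : Submodule ℂ M).comap (toEnd ℂ L M x) := by
      refine sup_le ?_ (iSup_le fun j => ?_)
      · rw [Submodule.span_singleton_le_iff_mem, Submodule.mem_comap]
        refine Submodule.mem_iSup_of_mem k ?_
        rw [Module.End.mem_eigenspace_iff]
        exact shift _ _ hRw
      · intro y hy
        rw [Module.End.mem_eigenspace_iff] at hy
        rw [Submodule.mem_comap]
        refine Submodule.mem_iSup_of_mem (j + k + 1) ?_
        rw [Module.End.mem_eigenspace_iff]
        have := shift _ _ hy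
        simp only [toEnd_apply_apply]
        rw [this]
        congr 1; push_cast; ring
    exact hsub hs
  have hx' := t.hN hx
  clear hx
  induction hx' using Submodule.span_induction with
  | mem x h => obtain ⟨k, hk⟩ := h; exact key k x hk s hs
  | zero => rw [zero_lie]; exact zero_mem _
  | add a b _ _ ha hb =>
    rw [add_lie]
    exact add_mem ha hb
  | smul c a _ ha => rw [smul_lie]; exact Submodule.smul_mem _ _ ha

theorem low_top (R : L) (m : ℂ) {w : M} (hRw : ⁅R, w⁆ = m • w) :
    (ℂ ∙ w) ⊔ low R m ≤ ⨆ k : ℕ, (toEnd ℂ L M R).eigenspace (m - (k : ℂ)) := by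
  refine sup_le ?_ (iSup_le fun j => ?_)
  · rw [Submodule.span_singleton_le_iff_mem]
    refine Submodule.mem_iSup_of_mem 0 ?_
    rw [Module.End.mem_eigenspace_iff]
    simpa using hRw
  · refine le_iSup_of_le (j + 1) (le_of_eq ?_)
    push_cast; rfl

theorem cyc_eq_top [IsSimpleOrder (LieSubmodule ℂ L M)] (t : Tri_s7 N H P R)
    {μ : Module.Dual ℂ H} {w : M} (hw : IsHW H P μ w) : cyc N w = ⊤ := by
  rcases eq_bot_or_eq_top (cycLie t hw) with h | h
  · have : w ∈ cycLie t hw := mem_cyc N w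
    rw [h, LieSubmodule.mem_bot] at this
    exact absurd this hw.ne
  · rw [eq_top_iff]
    intro x _
    have : x ∈ cycLie t hw := by rw [h]; trivial
    exact this

theorem eigen_of_hw [IsSimpleOrder (LieSubmodule ℂ L M)] (t : Tri_s7 N H P R)
    {μ : Module.Dual ℂ H} {w : M} (hw : IsHW H P μ w) {x : M} (hx : x ≠ 0) {a : ℂ}
    (hxa : ⁅R, x⁆ = a • x) : ∃ k : ℕ, a = μ ⟨R, t.memH⟩ - k := by
  refine exists_eq_of_mem_iSup_eigenspace (toEnd ℂ L M R) (fun k : ℕ => μ ⟨R, t.memH⟩ - (k : ℂ))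
    hx hxa ?_
  refine low_top R _ (hw.wt ⟨R, t.memH⟩) (cyc_le_low t hw ?_)
  rw [cyc_eq_top t hw]; trivial

/-- The `R`-degree of the highest weight is a half natural number `n / 2`, and `-n/2` is
also an `R`-eigenvalue. -/
theorem exists_lowest [FiniteDimensional ℂ M] (t : Tri_s7 N H P R) {μ : Module.Dual ℂ H} {w : M}
    (hw : IsHW H P μ w) : ∃ x : M, x ≠ 0 ∧ ⁅R, x⁆ = (-(μ ⟨R, t.memH⟩)) • x := by
  have hRw : ⁅R, w⁆ = μ ⟨R, t.memH⟩ • w := hw.wt ⟨R, t.memH⟩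
  rcases t.sl2 with h | ⟨e, he, f, hf, T⟩
  · refine ⟨w, hw.ne, ?_⟩
    have : (⟨R, t.memH⟩ : H) = 0 := Subtype.ext h
    rw [this, map_zero, h]; simp
  · have pv : T.HasPrimitiveVectorWith w (2 * μ ⟨R, t.memH⟩) :=
      ⟨hw.ne, by rw [smul_lie, hRw, smul_smul], hw.kill e he⟩
    obtain ⟨n, hn⟩ := pv.exists_nat
    refine ⟨_, pv.pow_toEnd_f_ne_zero_of_eq_nat hn le_rfl, ?_⟩
    have h2 := pv.lie_h_pow_toEnd_f n
    rw [smul_lie, ← hn] at h2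
    have h3 := congrArg (fun y => (1 / 2 : ℂ) • y) h2
    simp only [smul_smul] at h3
    rw [show (1 / 2 * 2 : ℂ) = 1 by norm_num, one_smul] at h3
    rw [h3]; congr 1; ring

theorem hw_lw_degree [FiniteDimensional ℂ M] [IsSimpleOrder (LieSubmodule ℂ L M)]
    (t : Tri_s7 N H P R) {μ lam : Module.Dual ℂ H} {w c : M}
    (hw : IsHW H P μ w) (hc : IsHW H N lam c) :
    μ ⟨R, t.memH⟩ = - lam ⟨R, t.memH⟩ := by
  have hneg : lam ⟨-R, t.symm.memH⟩ = - lam ⟨R, t.memH⟩ := by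
    rw [← map_neg]; rfl
  obtain ⟨x, hx, hxe⟩ := exists_lowest t hw
  obtain ⟨y, hy, hye⟩ := exists_lowest t.symm hc
  obtain ⟨k, hk⟩ := eigen_of_hw t.symm hc (a := μ ⟨R, t.memH⟩) hx (by
    rw [neg_lie, hxe, neg_smul, neg_neg])
  obtain ⟨l, hl⟩ := eigen_of_hw t hw (a := lam ⟨-R, t.symm.memH⟩) hy (by
    rw [← neg_eq_iff_eq_neg.mpr (neg_lie R y), hye, neg_smul, neg_neg])
  rw [hneg] at hk hl
  have h3 : ((k + l : ℕ) : ℂ) = 0 := by push_cast; linear_combination hk + hl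
  have h4 : k + l = 0 := by exact_mod_cast h3
  have h5 : k = 0 := by omega
  rw [hk, h5]; simp

/-- Existence of highest weight vectors. -/
theorem exists_hw [FiniteDimensional ℂ M] [Nontrivial M] (t : Tri_s7 N H P R) :
    ∃ (μ : Module.Dual ℂ H) (w : M), IsHW H P μ w := by
  let D := toEnd ℂ L M R
  obtain ⟨a0, ha0⟩ := Module.End.exists_eigenvalue D
  -- a maximal eigenvalue
  obtain ⟨a, ha, hmax⟩ : ∃ a, D.HasEigenvalue a ∧ ∀ k : ℕ, ¬ D.HasEigenvalue (a + (k + 1)) := by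
    by_contra! hcon
    have hfin : Set.Finite {a | D.HasEigenvalue a} := Module.End.finite_hasEigenvalue D
    obtain ⟨b, hb, hbmax⟩ := hfin.exists_maximalFor (fun z : ℂ => z.re) _ ⟨a0, ha0⟩
    obtain ⟨k, hk⟩ := hcon b hb
    have := hbmax hk (by simp; positivity)
    simp at this
    have h2 : (0 : ℝ) ≤ k := by positivity
    linarith
  let E : LieSubmodule ℂ H M :=
    { D.eigenspace a with
      lie_mem := by
        intro h y hy
        change y ∈ D.eigenspace a at hy
        change ⁅h, y⁆ ∈ D.eigenspace a
        rw [Module.End.mem_eigenspace_iff] at hy ⊢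
        change ⁅R, y⁆ = a • y at hy
        change ⁅R, ⁅(h : L), y⁆⁆ = a • ⁅(h : L), y⁆
        rw [leibniz_lie, t.comm R t.memH h h.2, zero_lie, hy, lie_smul, zero_add] }
  have hE : ∀ y : M, y ∈ E ↔ ⁅R, y⁆ = a • y := fun y => Module.End.mem_eigenspace_iff
  have : IsLieAbelian H := ⟨fun x y => Subtype.ext (t.comm x x.2 y y.2)⟩
  obtain ⟨y0, hy0⟩ := ha.exists_hasEigenvector
  have : Nontrivial E := ⟨⟨⟨y0, hy0.1⟩, 0, fun h => hy0.2 (congrArg Subtype.val h)⟩⟩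
  have : FiniteDimensional ℂ E := inferInstanceAs (FiniteDimensional ℂ (D.eigenspace a))
  obtain ⟨χ, hχ⟩ := exists_nontrivial_weightSpace_of_isSolvable ℂ H E
  obtain ⟨⟨w, hw⟩, hw0⟩ := exists_ne (0 : weightSpace E χ)
  rw [mem_weightSpace] at hw
  refine ⟨χ, w, ?_, ?_, ?_⟩
  · intro h; exact hw0 (Subtype.ext (Subtype.ext h))
  · intro h; exact congrArg Subtype.val (hw h)
  · intro p hp
    have hRw : ⁅R, (w : M)⁆ = a • (w : M) := (hE _).mp w.2
    have hp' := t.hP hp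
    clear hp
    induction hp' using Submodule.span_induction with
    | mem x h =>
      obtain ⟨k, hk⟩ := h
      by_contra hne
      refine hmax k (Module.End.hasEigenvalue_of_hasEigenvector (x := ⁅x, (w : M)⁆) ⟨?_, hne⟩)
      rw [Module.End.mem_eigenspace_iff]
      change ⁅R, ⁅x, (w : M)⁆⁆ = _
      rw [leibniz_lie, hk, hRw, lie_smul, smul_lie, ← add_smul]
      congr 1; ring
    | zero => simp
    | add a b _ _ ha hb => rw [add_lie, ha, hb, add_zero]
    | smul c a _ ha => rw [smul_lie, ha, smul_zero]

/-- Elements of degree zero lie in `H`. -/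
theorem Tri_s7.mem_of_degree_zero (t : Tri_s7 N H P R) {z : L} (hz : ⁅R, z⁆ = 0) : z ∈ H := by
  obtain ⟨n, hn, h, hh, p, hp, rfl⟩ := t.exists_decomp z
  suffices h0 : n + p = 0 by
    have : n + h + p = h := by rw [add_right_comm, h0, zero_add]
    rwa [this]
  have hR : ⁅R, n + p⁆ = 0 := by
    have h1 := t.comm R t.memH h hh
    rw [add_right_comm, lie_add, h1, add_zero] at hz
    exact hz
  by_contra hne
  obtain ⟨k, hk⟩ := exists_eq_of_mem_iSup_eigenspace (toEnd ℂ L L R)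
    (fun k : {c : ℂ // c ≠ 0} => (k : ℂ)) (a := 0) hne (by simpa using hR) (by
      refine add_mem ?_ ?_
      · refine (t.hN.trans (Submodule.span_le.mpr ?_)) hn
        rintro x ⟨k, hk⟩
        refine Submodule.mem_iSup_of_mem ⟨-((k : ℂ) + 1), ?_⟩ ?_
        · exact neg_ne_zero.mpr (Nat.cast_add_one_ne_zero k)
        · exact Module.End.mem_eigenspace_iff.mpr hk
      · refine (t.hP.trans (Submodule.span_le.mpr ?_)) hp
        rintro x ⟨k, hk⟩
        refine Submodule.mem_iSup_of_mem ⟨((k : ℂ) + 1), ?_⟩ ?_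
        · exact Nat.cast_add_one_ne_zero k
        · exact Module.End.mem_eigenspace_iff.mpr hk)
  exact k.2 hk.symm

end Abstract

/-! ### Uniqueness of irreducibles with given highest weight -/

section Unique

variable {V M : Type} [AddCommGroup V] [Module ℂ V] [LieRingModule L V] [LieModule ℂ L V]
  [AddCommGroup M] [Module ℂ M] [LieRingModule L M] [LieModule ℂ L M]

/-- The product of two Lie modules. -/
instance prodLieRingModule : LieRingModule L (V × M) where
  bracket x y := (⁅x, y.1⁆, ⁅x, y.2⁆)
  add_lie x y m := by ext <;> simp
  lie_add x m n := by ext <;> simp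
  leibniz_lie x y m := by ext <;> simp

theorem lie_prod (x : L) (y : V × M) : ⁅x, y⁆ = (⁅x, y.1⁆, ⁅x, y.2⁆) := rfl

instance prodLieModule : LieModule ℂ L (V × M) where
  smul_lie c x m := by ext <;> simp [lie_prod]
  lie_smul c x m := by ext <;> simp [lie_prod]

variable {N P : Submodule ℂ L} {H : LieSubalgebra ℂ L} {R : L}

theorem exists_equivariant [IsSimpleOrder (LieSubmodule ℂ L V)]
    [IsSimpleOrder (LieSubmodule ℂ L M)] (t : Tri_s7 N H P R) {μ : Module.Dual ℂ H} {v : V} {w : M}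
    (hv : IsHW H P μ v) (hw : IsHW H P μ w) :
    ∃ g : V ≃ₗ[ℂ] M, ∀ (x : L) (y : V), g ⁅x, y⁆ = ⁅x, g y⁆ := by
  have hvw : IsHW H P μ ((v, w) : V × M) :=
    ⟨fun h => hv.ne (congrArg Prod.fst h),
     fun h => by rw [lie_prod, hv.wt, hw.wt]; rfl,
     fun p hp => by rw [lie_prod, hv.kill p hp, hw.kill p hp]; rfl⟩
  set m := μ ⟨R, t.memH⟩ with hm
  have hRv : ⁅R, v⁆ = m • v := hv.wt ⟨R, t.memH⟩
  have hRw : ⁅R, w⁆ = m • w := hw.wt ⟨R, t.memH⟩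
  let S := cycLie t hvw
  have hS : ((v, w) : V × M) ∈ S := mem_cyc N _
  -- degree `m` elements of `S` are multiples of `(v, w)`
  have key : ∀ y ∈ S, ⁅R, y⁆ = m • y → ∃ c : ℂ, y = c • ((v, w) : V × M) := by
    intro y hy hRy
    have h1 := cyc_le_low t hvw hy
    obtain ⟨a, ha, b, hb, hab⟩ := Submodule.mem_sup.mp h1
    obtain ⟨c, rfl⟩ := Submodule.mem_span_singleton.mp ha
    refine ⟨c, ?_⟩
    suffices b = 0 by rw [← hab, this, add_zero]
    by_contra hb0
    have hRb : ⁅R, b⁆ = m • b := by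
      have : b = y - c • ((v, w) : V × M) := by rw [← hab]; abel
      rw [this, lie_sub, lie_smul, hRy, lie_prod, hRv, hRw]
      ext <;> simp only [Prod.fst_sub, Prod.snd_sub, Prod.smul_fst, Prod.smul_snd] <;> module
    obtain ⟨k, hk⟩ := exists_eq_of_mem_iSup_eigenspace (toEnd ℂ L (V × M) R)
      (fun k : ℕ => m - ((k : ℂ) + 1)) hb0 hRb hb
    exact Nat.cast_add_one_ne_zero (R := ℂ) k (by linear_combination hk)
  let K1 : LieSubmodule ℂ L V :=
    { (S.toSubmodule.comap (LinearMap.inl ℂ V M)) with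
      lie_mem := by
        intro x y hy
        change ((y, 0) : V × M) ∈ S at hy
        change ((⁅x, y⁆, 0) : V × M) ∈ S
        have := S.lie_mem (x := x) hy
        rw [lie_prod] at this
        simpa using this }
  let K2 : LieSubmodule ℂ L M :=
    { (S.toSubmodule.comap (LinearMap.inr ℂ V M)) with
      lie_mem := by
        intro x y hy
        change ((0, y) : V × M) ∈ S at hy
        change ((0, ⁅x, y⁆) : V × M) ∈ S
        have := S.lie_mem (x := x) hy
        rw [lie_prod] at this
        simpa using this }
  have hK1 : K1 = ⊥ := by
    refine (eq_bot_or_eq_top K1).resolve_right fun h => ?_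
    have h1 : v ∈ K1 := by rw [h]; trivial
    obtain ⟨c, hc⟩ := key (v, 0) h1 (by rw [lie_prod, hRv]; ext <;> simp)
    have h2 : (0 : M) = c • w := congrArg Prod.snd hc
    have h3 : v = c • v := congrArg Prod.fst hc
    rcases smul_eq_zero.mp h2.symm with h | h
    · rw [h, zero_smul] at h3; exact hv.ne h3
    · exact hw.ne h
  have hK2 : K2 = ⊥ := by
    refine (eq_bot_or_eq_top K2).resolve_right fun h => ?_
    have h1 : w ∈ K2 := by rw [h]; trivial
    obtain ⟨c, hc⟩ := key (0, w) h1 (by rw [lie_prod, hRw]; ext <;> simp)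
    have h2 : w = c • w := congrArg Prod.snd hc
    have h3 : 0 = c • v := congrArg Prod.fst hc
    rcases smul_eq_zero.mp h3.symm with h | h
    · rw [h, zero_smul] at h2; exact hw.ne h2
    · exact hv.ne h
  let p1 : S.toSubmodule →ₗ[ℂ] V := (LinearMap.fst ℂ V M).comp S.toSubmodule.subtype
  let p2 : S.toSubmodule →ₗ[ℂ] M := (LinearMap.snd ℂ V M).comp S.toSubmodule.subtype
  have inj1 : Function.Injective p1 := by
    rw [← LinearMap.ker_eq_bot, LinearMap.ker_eq_bot']
    rintro ⟨⟨a, b⟩, hab⟩ h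
    have ha : a = 0 := h
    subst ha
    have hb : b ∈ K2 := hab
    rw [hK2, LieSubmodule.mem_bot] at hb
    subst hb; rfl
  have inj2 : Function.Injective p2 := by
    rw [← LinearMap.ker_eq_bot, LinearMap.ker_eq_bot']
    rintro ⟨⟨a, b⟩, hab⟩ h
    have hb : b = 0 := h
    subst hb
    have ha : a ∈ K1 := hab
    rw [hK1, LieSubmodule.mem_bot] at ha
    subst ha; rfl
  let I1 : LieSubmodule ℂ L V :=
    { LinearMap.range p1 with
      lie_mem := by
        rintro x _ ⟨y, rfl⟩
        exact ⟨⟨⁅x, (y : V × M)⁆, S.lie_mem y.2⟩, rfl⟩ }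
  let I2 : LieSubmodule ℂ L M :=
    { LinearMap.range p2 with
      lie_mem := by
        rintro x _ ⟨y, rfl⟩
        exact ⟨⟨⁅x, (y : V × M)⁆, S.lie_mem y.2⟩, rfl⟩ }
  have hI1 : I1 = ⊤ := by
    refine (eq_bot_or_eq_top I1).resolve_left fun h => ?_
    have h1 : v ∈ I1 := ⟨⟨(v, w), hS⟩, rfl⟩
    rw [h, LieSubmodule.mem_bot] at h1
    exact hv.ne h1
  have hI2 : I2 = ⊤ := by
    refine (eq_bot_or_eq_top I2).resolve_left fun h => ?_
    have h1 : w ∈ I2 := ⟨⟨(v, w), hS⟩, rfl⟩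
    rw [h, LieSubmodule.mem_bot] at h1
    exact hw.ne h1
  have sur1 : Function.Surjective p1 := fun y => by
    have : y ∈ I1 := by rw [hI1]; trivial
    exact this
  have sur2 : Function.Surjective p2 := fun y => by
    have : y ∈ I2 := by rw [hI2]; trivial
    exact this
  let g1 := LinearEquiv.ofBijective p1 ⟨inj1, sur1⟩
  let g2 := LinearEquiv.ofBijective p2 ⟨inj2, sur2⟩
  refine ⟨g1.symm.trans g2, fun x y => ?_⟩
  obtain ⟨s, rfl⟩ := g1.surjective y
  have e1 : ⁅x, g1 s⁆ = g1 ⟨⁅x, (s : V × M)⁆, S.lie_mem s.2⟩ := rfl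
  rw [e1]
  simp only [LinearEquiv.trans_apply, LinearEquiv.symm_apply_apply]
  rfl

end Unique

/-! ### The dual module -/

section DualModule

variable {V : Type} [AddCommGroup V] [Module ℂ V] [LieRingModule L V] [LieModule ℂ L V]
  [FiniteDimensional ℂ V]

theorem dual_simple (h : IsSimpleOrder (LieSubmodule ℂ L V)) :
    IsSimpleOrder (LieSubmodule ℂ L (Module.Dual ℂ V)) := by
  have hV : Nontrivial V := by
    by_contra hc
    rw [not_nontrivial_iff_subsingleton] at hc
    obtain ⟨a, b, hab⟩ := h.toNontrivial
    exact hab (by ext x; simp [Subsingleton.elim x 0])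
  have hD : Nontrivial (Module.Dual ℂ V) := inferInstance
  have : Nontrivial (LieSubmodule ℂ L (Module.Dual ℂ V)) := by
    obtain ⟨ξ, hξ⟩ := exists_ne (0 : Module.Dual ℂ V)
    refine ⟨⊥, ⊤, fun h => hξ ?_⟩
    have : ξ ∈ (⊤ : LieSubmodule ℂ L (Module.Dual ℂ V)) := trivial
    rw [← h, LieSubmodule.mem_bot] at this
    exact this
  refine ⟨fun K => ?_⟩
  let A : LieSubmodule ℂ L V :=
    { K.toSubmodule.dualCoannihilator with
      lie_mem := by
        intro x y hy
        change y ∈ K.toSubmodule.dualCoannihilator at hy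
        change ⁅x, y⁆ ∈ K.toSubmodule.dualCoannihilator
        rw [Submodule.mem_dualCoannihilator] at hy ⊢
        intro ξ hξ
        have := hy ⁅x, ξ⁆ (K.lie_mem hξ)
        rwa [Module.Dual.lie_apply, neg_eq_zero] at this }
  have hK : K.toSubmodule = K.toSubmodule.dualCoannihilator.dualAnnihilator :=
    (Subspace.dualCoannihilator_dualAnnihilator_eq).symm
  rcases eq_bot_or_eq_top A with hA | hA
  · right
    have h1 : K.toSubmodule.dualCoannihilator = ⊥ := congrArg LieSubmodule.toSubmodule hA
    rw [← LieSubmodule.toSubmodule_inj, hK, h1, Submodule.dualAnnihilator_bot]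
    rfl
  · left
    have h1 : K.toSubmodule.dualCoannihilator = ⊤ := congrArg LieSubmodule.toSubmodule hA
    rw [← LieSubmodule.toSubmodule_inj, hK, h1, Submodule.dualAnnihilator_top]
    rfl

variable (L) in
/-- Contraction `L ⊗ (V ⊗ V) → L` with two functionals. -/
noncomputable def contr (ξ ω : Module.Dual ℂ V) : (L ⊗[ℂ] (V ⊗[ℂ] V)) →ₗ[ℂ] L :=
  (TensorProduct.rid ℂ L).toLinearMap.comp
    (LinearMap.lTensor L ((TensorProduct.lid ℂ ℂ).toLinearMap.comp (TensorProduct.map ξ ω)))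

theorem contr_tmul (ξ ω : Module.Dual ℂ V) (x : L) (a b : V) :
    contr L ξ ω (x ⊗ₜ (a ⊗ₜ b)) = (ξ a * ω b) • x := by
  simp [contr]

theorem tensor_ind {p : L ⊗[ℂ] (V ⊗[ℂ] V) → Prop}
    (h0 : p 0) (h1 : ∀ (x : L) (a b : V), p (x ⊗ₜ (a ⊗ₜ b)))
    (h2 : ∀ s t, p s → p t → p (s + t)) (T : L ⊗[ℂ] (V ⊗[ℂ] V)) : p T := by
  induction T using TensorProduct.induction_on with
  | zero => exact h0
  | add s t hs ht => exact h2 s t hs ht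
  | tmul x y =>
    induction y using TensorProduct.induction_on with
    | zero => rw [TensorProduct.tmul_zero]; exact h0
    | add s t hs ht => rw [TensorProduct.tmul_add]; exact h2 _ _ hs ht
    | tmul a b => exact h1 x a b

theorem contr_lie (ξ ω : Module.Dual ℂ V) (x : L) (T : L ⊗[ℂ] (V ⊗[ℂ] V)) :
    ⁅x, contr L ξ ω T⁆ = contr L ⁅x, ξ⁆ ω T + contr L ξ ⁅x, ω⁆ T + contr L ξ ω ⁅x, T⁆ := by
  induction T using tensor_ind with
  | h0 => simp
  | h1 y a b =>
    simp only [TensorProduct.LieModule.lie_tmul_right, TensorProduct.tmul_add, map_add, contr_tmul,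
      Module.Dual.lie_apply, lie_smul]
    module
  | h2 s t hs ht =>
    simp only [map_add, lie_add, hs, ht]
    abel

theorem contr_add_left (ξ ξ' ω : Module.Dual ℂ V) (T : L ⊗[ℂ] (V ⊗[ℂ] V)) :
    contr L (ξ + ξ') ω T = contr L ξ ω T + contr L ξ' ω T := by
  induction T using tensor_ind with
  | h0 => simp
  | h1 y a b =>
    simp only [contr_tmul, LinearMap.add_apply]; module
  | h2 s t hs ht =>
    simp only [map_add, hs, ht]; abel

theorem contr_smul_left (c : ℂ) (ξ ω : Module.Dual ℂ V) (T : L ⊗[ℂ] (V ⊗[ℂ] V)) :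
    contr L (c • ξ) ω T = c • contr L ξ ω T := by
  induction T using tensor_ind with
  | h0 => simp
  | h1 y a b =>
    simp only [contr_tmul, LinearMap.smul_apply, smul_eq_mul]; module
  | h2 s t hs ht =>
    simp only [map_add, hs, ht, smul_add]

theorem contr_add_right (ξ ω ω' : Module.Dual ℂ V) (T : L ⊗[ℂ] (V ⊗[ℂ] V)) :
    contr L ξ (ω + ω') T = contr L ξ ω T + contr L ξ ω' T := by
  induction T using tensor_ind with
  | h0 => simp
  | h1 y a b =>
    simp only [contr_tmul, LinearMap.add_apply]; module
  | h2 s t hs ht =>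
    simp only [map_add, hs, ht]; abel

theorem contr_smul_right (c : ℂ) (ξ ω : Module.Dual ℂ V) (T : L ⊗[ℂ] (V ⊗[ℂ] V)) :
    contr L ξ (c • ω) T = c • contr L ξ ω T := by
  induction T using tensor_ind with
  | h0 => simp
  | h1 y a b =>
    simp only [contr_tmul, LinearMap.smul_apply, smul_eq_mul]; module
  | h2 s t hs ht =>
    simp only [map_add, hs, ht, smul_add]

/-- The contraction as a bilinear map. -/
noncomputable def tau (T : L ⊗[ℂ] (V ⊗[ℂ] V)) :
    Module.Dual ℂ V →ₗ[ℂ] Module.Dual ℂ V →ₗ[ℂ] L :=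
  LinearMap.mk₂ ℂ (fun ξ ω => contr L ξ ω T) (fun a b c => contr_add_left a b c T)
    (fun c a b => contr_smul_left c a b T) (fun a b c => contr_add_right a b c T)
    (fun c a b => contr_smul_right c a b T)

theorem eq_zero_of_tau (T : L ⊗[ℂ] (V ⊗[ℂ] V)) (h : ∀ ξ ω, tau T ξ ω = 0) : T = 0 := by
  let b := Module.finBasis ℂ V
  have key : ∀ T : L ⊗[ℂ] (V ⊗[ℂ] V), T = ∑ i, ∑ j, (contr L (b.coord i) (b.coord j) T) ⊗ₜ[ℂ] (b i ⊗ₜ[ℂ] b j) := by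
    clear h T
    intro T
    induction T using tensor_ind with
    | h0 => simp
    | h1 x a c =>
      conv_lhs => rw [← b.sum_repr a, ← b.sum_repr c]
      simp only [contr_tmul, TensorProduct.sum_tmul, TensorProduct.tmul_sum,
        Module.Basis.coord_apply]
      rw [Finset.sum_comm]
      refine Finset.sum_congr rfl fun i _ => Finset.sum_congr rfl fun j _ => ?_
      rw [TensorProduct.smul_tmul_smul, ← TensorProduct.smul_tmul]
    | h2 s t hs ht =>
      conv_lhs => rw [hs, ht]
      simp only [map_add, TensorProduct.add_tmul, Finset.sum_add_distrib]
  rw [key T]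
  refine Finset.sum_eq_zero fun i _ => Finset.sum_eq_zero fun j _ => ?_
  have : contr L (b.coord i) (b.coord j) T = 0 := h _ _
  rw [this, TensorProduct.zero_tmul]

variable {N P : Submodule ℂ L} {H : LieSubalgebra ℂ L} {R : L}

/-- The main argument, in abstract form. -/
theorem main_abstract (t : Tri_s7 N H P R) (hirr : IsSimpleOrder (LieSubmodule ℂ L V))
    {μ : Module.Dual ℂ H} {v : V} (hv : IsHW H P μ v)
    (hnot : ¬ IsDualPair (L := L) V V) (T : L ⊗[ℂ] (V ⊗[ℂ] V)) (hT : ∀ x : L, ⁅x, T⁆ = 0) :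
    T = 0 := by
  by_contra hT0
  have hD : IsSimpleOrder (LieSubmodule ℂ L (Module.Dual ℂ V)) := dual_simple hirr
  have hVn : Nontrivial V := ⟨v, 0, hv.ne⟩
  have htau : ∀ (x : L) (ξ ω : Module.Dual ℂ V),
      ⁅x, tau T ξ ω⁆ = tau T ⁅x, ξ⁆ ω + tau T ξ ⁅x, ω⁆ := by
    intro x ξ ω
    have := contr_lie ξ ω x T
    rw [hT x, map_zero, add_zero] at this
    exact this
  obtain ⟨μ', w, hw⟩ := exists_hw (M := Module.Dual ℂ V) t
  obtain ⟨lam, c, hc⟩ := exists_hw (M := Module.Dual ℂ V) t.symm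
  have hctop : cyc P c = ⊤ := cyc_eq_top t.symm hc
  -- the lowest weight of the dual is `-μ`
  have hcv : c v ≠ 0 := by
    intro h0
    have hle : cyc P c ≤ LinearMap.ker (Module.Dual.eval ℂ V v) := by
      refine cyc_le (by simpa using h0) ?_
      intro p hp ξ _
      simp [hv.kill p hp]
    rw [hctop] at hle
    refine hv.ne ((Module.forall_dual_apply_eq_zero_iff ℂ v).mp fun ξ => ?_)
    have : ξ ∈ LinearMap.ker (Module.Dual.eval ℂ V v) := hle trivial
    simpa using this
  have hlam : ∀ h : H, lam h = - μ h := by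
    intro h
    have h1 := congrArg (fun ξ : Module.Dual ℂ V => ξ v) (hc.wt h)
    simp only [Module.Dual.lie_apply, hv.wt h, map_smul, LinearMap.smul_apply, smul_eq_mul] at h1
    exact mul_right_cancel₀ hcv (by linear_combination - h1)
  have hdeg : μ' ⟨R, t.memH⟩ = μ ⟨R, t.memH⟩ := by
    rw [hw_lw_degree t hw hc, hlam, neg_neg]
  -- `τ(w, c) ≠ 0`
  have hz : tau T w c ≠ 0 := by
    intro h0
    have hle : cyc P c ≤ LinearMap.ker (tau T w) := by
      refine cyc_le h0 ?_
      intro p hp ξ hξ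
      rw [LinearMap.mem_ker] at hξ ⊢
      have := htau p w ξ
      rw [hξ, hw.kill p hp] at this
      simpa using this.symm
    rw [hctop] at hle
    let K : LieSubmodule ℂ L (Module.Dual ℂ V) :=
      { LinearMap.ker (tau T) with
        lie_mem := by
          intro x ξ hξ
          change ξ ∈ LinearMap.ker (tau T) at hξ
          change ⁅x, ξ⁆ ∈ LinearMap.ker (tau T)
          rw [LinearMap.mem_ker] at hξ ⊢
          ext1 ω
          have := htau x ξ ω
          rw [hξ] at this
          simpa using this.symm }
    have hwK : w ∈ K := by
      change w ∈ LinearMap.ker (tau T)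
      rw [LinearMap.mem_ker]
      ext1 ω
      exact hle (show ω ∈ ⊤ from trivial)
    have hK : K = ⊤ := by
      refine (eq_bot_or_eq_top K).resolve_left fun h => ?_
      rw [h, LieSubmodule.mem_bot] at hwK
      exact hw.ne hwK
    refine hT0 (eq_zero_of_tau T fun ξ ω => ?_)
    have h1 : ξ ∈ K := by rw [hK]; trivial
    have h2 : tau T ξ = 0 := h1
    rw [h2]; rfl
  have hwtz : ∀ h : H, ⁅(h : L), tau T w c⁆ = (μ' h - μ h) • tau T w c := by
    intro h
    rw [htau, hw.wt, hc.wt, hlam, map_smul, map_smul, LinearMap.smul_apply]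
    module
  have hzH : tau T w c ∈ H := by
    refine t.mem_of_degree_zero ?_
    have := hwtz ⟨R, t.memH⟩
    rw [hdeg, sub_self, zero_smul] at this
    exact this
  have hμ : μ' = μ := by
    ext h
    have h1 := hwtz h
    rw [t.comm h h.2 _ hzH] at h1
    exact sub_eq_zero.mp ((smul_eq_zero.mp h1.symm).resolve_right hz)
  subst hμ
  obtain ⟨g, hg⟩ := exists_equivariant t hv hw
  refine hnot ⟨g.toLinearMap, ?_, ?_, ?_⟩
  · intro a ha
    refine g.map_eq_zero_iff.mp ?_
    ext y
    exact ha y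
  · intro a ha
    refine (Module.forall_dual_apply_eq_zero_iff ℂ a).mp fun ξ => ?_
    obtain ⟨y, rfl⟩ := g.surjective ξ
    exact ha y
  · intro x a b
    have := congrArg (fun ξ : Module.Dual ℂ V => ξ b) (hg x a)
    simp only [Module.Dual.lie_apply] at this
    change g ⁅x, a⁆ b + g a ⁅x, b⁆ = 0
    rw [this]; ring

end DualModule

/-! ### The triangular decomposition attached to a base -/

section Concrete

variable [FiniteDimensional ℂ L] [LieAlgebra.IsSemisimple ℂ L]
  {H : LieSubalgebra ℂ L} [H.IsCartanSubalgebra] {r : ℕ} {α : Fin r → Module.Dual ℂ H}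

/-- The span of the positive root spaces. -/
def posPart (H : LieSubalgebra ℂ L) [H.IsCartanSubalgebra] (α : Fin r → Module.Dual ℂ H) :
    Submodule ℂ L :=
  Submodule.span ℂ {x | ∃ χ : Module.Dual ℂ H, IsPosRoot H α χ ∧ x ∈ rootSpace H ⇑χ}

/-- The span of the negative root spaces. -/
def negPart (H : LieSubalgebra ℂ L) [H.IsCartanSubalgebra] (α : Fin r → Module.Dual ℂ H) :
    Submodule ℂ L :=
  Submodule.span ℂ {x | ∃ χ : Module.Dual ℂ H, IsRoot H χ ∧
    (∃ c : Fin r → ℕ, χ = -∑ j, (c j : ℂ) • α j) ∧ x ∈ rootSpace H ⇑χ}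

theorem decomp_concrete (hbase : IsBase H α) :
    negPart H α ⊔ H.toSubmodule ⊔ posPart H α = ⊤ := by
  rw [eq_top_iff]
  have h := iSup_genWeightSpace_eq_top' ℂ H L
  have h' := congrArg LieSubmodule.toSubmodule h
  rw [LieSubmodule.iSup_toSubmodule, LieSubmodule.top_toSubmodule] at h'
  rw [← h']
  refine iSup_le fun χ => ?_
  by_cases hχ : χ.toLinear = 0
  · have h0 : (χ : H → ℂ) = 0 := by
      ext y; exact congrArg (fun l : Module.Dual ℂ H => l y) hχ
    intro x hx
    rw [h0] at hx
    have hx' : x ∈ rootSpace H (0 : H → ℂ) := hx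
    rw [rootSpace_zero_eq] at hx'
    exact Submodule.mem_sup_left (Submodule.mem_sup_right hx')
  · have hroot : IsRoot H χ.toLinear := ⟨hχ, χ.genWeightSpace_ne_bot⟩
    rcases hbase.pos_neg _ hroot with hp | hn
    · exact fun x hx => Submodule.mem_sup_right (Submodule.subset_span ⟨_, ⟨hroot, hp⟩, hx⟩)
    · exact fun x hx => Submodule.mem_sup_left (Submodule.mem_sup_left
        (Submodule.subset_span ⟨_, hroot, hn, hx⟩))

theorem span_simple (hbase : IsBase H α) : Submodule.span ℂ (Set.range α) = ⊤ := by
  rw [eq_top_iff, ← LieAlgebra.IsKilling.span_weight_eq_top (K := ℂ) (L := L) (H := H), Submodule.span_le]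
  rintro _ ⟨χ, rfl⟩
  have hmem : ∀ c : Fin r → ℕ, ∑ j, (c j : ℂ) • α j ∈ Submodule.span ℂ (Set.range α) :=
    fun c => Submodule.sum_mem _ fun j _ =>
      Submodule.smul_mem _ _ (Submodule.subset_span ⟨j, rfl⟩)
  by_cases hχ : χ.toLinear = 0
  · rw [SetLike.mem_coe, hχ]; exact zero_mem _
  · have hroot : IsRoot H χ.toLinear := ⟨hχ, χ.genWeightSpace_ne_bot⟩
    rcases hbase.pos_neg _ hroot with ⟨c, hc⟩ | ⟨c, hc⟩
    · rw [SetLike.mem_coe, hc]; exact hmem c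
    · rw [SetLike.mem_coe, hc]; exact neg_mem (hmem c)

theorem exists_grading (hbase : IsBase H α) : ∃ R : H, ∀ j, α j R = 1 := by
  let b := Module.Basis.mk hbase.indep (span_simple hbase).ge
  refine ⟨(Module.evalEquiv ℂ H).symm (b.constr ℂ fun _ => (1 : ℂ)), fun j => ?_⟩
  rw [Module.apply_evalEquiv_symm_apply]
  have : α j = b j := by simp [b]
  rw [this, Module.Basis.constr_basis]

theorem coroot_indep (hbase : IsBase H α) {hc : Fin r → H}
    (hcoroot : ∀ j, IsCoroot H (α j) (hc j)) :
    Submodule.span ℂ (Set.range hc) = ⊤ := by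
  have hform : ∀ j, ∃ s : ℂ, s ≠ 0 ∧
      hc j = s • (LieAlgebra.IsKilling.cartanEquivDual H).symm (α j) := by
    intro j
    let χ : Weight ℂ H L := ⟨⇑(α j), (hbase.isRoot j).2⟩
    have hχl : χ.toLinear = α j := by ext y; rfl
    obtain ⟨h2, e, he, f, hf, hef⟩ := hcoroot j
    have h1 : hc j = LieAlgebra.IsKilling.coroot χ := by
      refine LieAlgebra.IsKilling.eq_coroot_of_mem_corootSpace_of_two χ ?_ h2
      rw [mem_corootSpace]
      exact Submodule.subset_span ⟨e, he, f, hf, hef.symm⟩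
    have h0 : hc j ≠ 0 := by
      intro h0; rw [h0, map_zero] at h2; norm_num at h2
    rw [LieAlgebra.IsKilling.coroot, hχl, ← Nat.cast_smul_eq_nsmul ℂ, smul_smul] at h1
    refine ⟨_, ?_, h1⟩
    intro hs
    rw [hs, zero_smul] at h1
    exact h0 h1
  choose s hs hsc using hform
  have hli : LinearIndependent ℂ hc := by
    have h1 : LinearIndependent ℂ
        (fun j => (LieAlgebra.IsKilling.cartanEquivDual H).symm (α j)) :=
      hbase.indep.map' (LieAlgebra.IsKilling.cartanEquivDual H).symm.toLinearMap
        (LinearEquiv.ker _)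
    have h2 := h1.units_smul (fun j => Units.mk0 (s j) (hs j))
    convert h2 using 1
    ext1 j
    exact hsc j
  refine hli.span_eq_top_of_card_eq_finrank' ?_
  have b := Module.Basis.mk hbase.indep (span_simple hbase).ge
  rw [← Subspace.dual_finrank_eq, Module.finrank_eq_card_basis b]

theorem rootSpace_sub_eq_bot (hbase : IsBase H α) {i j : Fin r} (hij : i ≠ j) :
    rootSpace H (⇑(α i) + ⇑(-α j)) = ⊥ := by
  by_contra hne
  have hsub : (⇑(α i) + ⇑(-α j) : H → ℂ) = ⇑(α i - α j) := by
    ext y; simp [sub_eq_add_neg]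
  rw [hsub] at hne
  have hli := Fintype.linearIndependent_iff.mp hbase.indep
  have hexp : ∀ (a : ℂ) (k : Fin r), a • α k = ∑ l, (if l = k then a else 0) • α l := by
    intro a k; simp [ite_smul]
  have hroot : IsRoot H (α i - α j) := by
    refine ⟨fun h0 => ?_, hne⟩
    have := hbase.indep.injective (sub_eq_zero.mp h0)
    exact hij this
  rcases hbase.pos_neg _ hroot with ⟨c, hc⟩ | ⟨c, hc⟩
  · have h := hli (fun l => (c l : ℂ) + (if l = j then 1 else 0) - (if l = i then 1 else 0)) (by
      simp only [sub_smul, add_smul, Finset.sum_add_distrib, Finset.sum_sub_distrib, ← hexp, ← hc]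
      module) j
    simp only [if_neg hij.symm, if_true, sub_zero] at h
    exact Nat.cast_add_one_ne_zero (R := ℂ) (c j) h
  · have h := hli (fun l => (c l : ℂ) + (if l = i then 1 else 0) - (if l = j then 1 else 0)) (by
      have hc' : ∑ l, (c l : ℂ) • α l = α j - α i := by rw [← neg_sub, hc, neg_neg]
      simp only [sub_smul, add_smul, Finset.sum_add_distrib, Finset.sum_sub_distrib, ← hexp, hc']
      module) i
    simp only [if_neg hij, if_true, sub_zero] at h
    exact Nat.cast_add_one_ne_zero (R := ℂ) (c i) h

theorem exists_tri (hbase : IsBase H α) {hc : Fin r → H}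
    (hcoroot : ∀ j, IsCoroot H (α j) (hc j)) :
    ∃ R : L, Tri_s7 (negPart H α) H (posPart H α) R := by
  obtain ⟨R, hR⟩ := exists_grading hbase
  have hlie : ∀ (χ : Module.Dual ℂ H) (x : L), x ∈ rootSpace H ⇑χ → ⁅(R : L), x⁆ = χ R • x :=
    fun χ x hx => LieAlgebra.IsKilling.lie_eq_smul_of_mem_rootSpace hx R
  have hsum : ∀ c : Fin r → ℕ, (∑ j, (c j : ℂ) • α j : Module.Dual ℂ H) ≠ 0 →
      ∃ k : ℕ, (∑ j, (c j : ℂ) • α j : Module.Dual ℂ H) R = (k : ℂ) + 1 := by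
    intro c hc0
    have h1 : (∑ j, (c j : ℂ) • α j : Module.Dual ℂ H) R = ((∑ j, c j : ℕ) : ℂ) := by
      simp [LinearMap.sum_apply, hR]
    have h2 : ∑ j, c j ≠ 0 := by
      intro h0
      refine hc0 (Finset.sum_eq_zero fun j _ => ?_)
      rw [Finset.sum_eq_zero_iff.mp h0 j (Finset.mem_univ j)]; simp
    obtain ⟨k, hk⟩ := Nat.exists_eq_succ_of_ne_zero h2
    exact ⟨k, by rw [h1, hk]; push_cast; rfl⟩
  have hsimple : ∀ j, IsPosRoot H α (α j) := fun j =>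
    ⟨hbase.isRoot j, fun l => if l = j then 1 else 0, by simp [ite_smul]⟩
  refine ⟨R, decomp_concrete hbase, R.2, ?_, ?_, ?_, ?_⟩
  · intro x hx y hy
    have h : ⁅(⟨x, hx⟩ : H), (⟨y, hy⟩ : H)⁆ = 0 := trivial_lie_zero H H _ _
    exact congrArg Subtype.val h
  · refine Submodule.span_mono ?_
    rintro x ⟨χ, hχ, ⟨c, rfl⟩, hx⟩
    obtain ⟨k, hk⟩ := hsum c (fun h => hχ.1 (by rw [h, neg_zero]))
    exact ⟨k, by rw [hlie _ x hx, LinearMap.neg_apply, hk]⟩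
  · refine Submodule.span_mono ?_
    rintro x ⟨χ, ⟨hχ, c, rfl⟩, hx⟩
    obtain ⟨k, hk⟩ := hsum c hχ.1
    exact ⟨k, by rw [hlie _ x hx, hk]⟩
  · by_cases hR0 : (R : L) = 0
    · exact Or.inl hR0
    right
    have hspan : (R : H) ∈ Submodule.span ℂ (Set.range hc) := by
      rw [coroot_indep hbase hcoroot]; trivial
    obtain ⟨c, hcR⟩ := (Submodule.mem_span_range_iff_exists_fun ℂ).mp hspan
    choose e he f hf hef using fun j => (hcoroot j).2
    have hRe : ∀ j, ⁅(R : L), e j⁆ = e j := fun j => by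
      rw [hlie _ _ (he j), hR, one_smul]
    have hRf : ∀ j, ⁅(R : L), f j⁆ = - f j := fun j => by
      rw [hlie _ _ (hf j), LinearMap.neg_apply, hR, neg_smul, one_smul]
    have hoff : ∀ i j, i ≠ j → ⁅e i, f j⁆ = 0 := by
      intro i j hij
      have h1 := lie_mem_genWeightSpace_of_mem_genWeightSpace (he i) (hf j)
      have h2 : ⁅e i, f j⁆ ∈ rootSpace H (⇑(α i) + ⇑(-α j)) := h1
      rw [rootSpace_sub_eq_bot hbase hij, LieSubmodule.mem_bot] at h2
      exact h2
    refine ⟨∑ j, e j, ?_, ∑ j, (2 * c j) • f j, ?_, ?_, ?_, ?_, ?_⟩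
    · exact Submodule.sum_mem _ fun j _ => Submodule.subset_span ⟨α j, hsimple j, he j⟩
    · refine Submodule.sum_mem _ fun j _ => Submodule.smul_mem _ _ (Submodule.subset_span ?_)
      by_cases hfj : f j = 0
      · exfalso
        have h1 := hef j
        rw [hfj, lie_zero] at h1
        have h2 : hc j = 0 := Subtype.ext h1
        have h3 := (hcoroot j).1
        rw [h2, map_zero] at h3
        norm_num at h3
      · refine ⟨-α j, ⟨neg_ne_zero.mpr (hbase.isRoot j).1, fun hb => hfj ?_⟩,
          ⟨fun l => if l = j then 1 else 0, by simp [ite_smul]⟩, hf j⟩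
        have := hf j
        rw [hb, LieSubmodule.mem_bot] at this
        exact this
    · exact smul_ne_zero two_ne_zero hR0
    · have hRc : (R : L) = ∑ j, c j • ⁅e j, f j⁆ := by
        rw [← hcR]
        simp [hef]
      rw [hRc, sum_lie, Finset.smul_sum]
      refine Finset.sum_congr rfl fun i _ => ?_
      rw [lie_sum, Finset.sum_eq_single i
        (fun j _ hji => by rw [lie_smul, hoff i j hji.symm, smul_zero]) (by simp),
        lie_smul, smul_smul]
    · rw [smul_lie, lie_sum]
      simp only [hRe]
      rw [two_smul, two_smul]
    · rw [smul_lie, lie_sum]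
      simp only [lie_smul, hRf, smul_neg, Finset.sum_neg_distrib]
      rw [two_smul, two_smul]

end Concrete

/-- If `μ ≠ μ̄`, i.e. `V_μ` is not self-dual, then the `𝔤`-invariant
subspaces of `adj(𝔤) ⊗ S²V_μ` and of `adj(𝔤) ⊗ Λ²V_μ` are both zero. -/
theorem statement7
    {L : Type} [LieRing L] [LieAlgebra ℂ L] [FiniteDimensional ℂ L]
    [LieAlgebra.IsSemisimple ℂ L]
    (H : LieSubalgebra ℂ L) [H.IsCartanSubalgebra]
    {r : ℕ} (α : Fin r → Module.Dual ℂ H) (hc : Fin r → H)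
    (hbase : IsBase H α) (hcoroot : ∀ j, IsCoroot H (α j) (hc j))
    (μ : Module.Dual ℂ H) (hμ : IsDomInt hc μ)
    (Vμ : Type) [AddCommGroup Vμ] [Module ℂ Vμ] [LieRingModule L Vμ]
    [LieModule ℂ L Vμ] [FiniteDimensional ℂ Vμ]
    (hVμ : IsHWIrrep H α μ Vμ)
    (hnotselfdual : ¬ IsDualPair (L := L) Vμ Vμ) :
    symSquareInvariants L Vμ = ⊥ ∧ altSquareInvariants L Vμ = ⊥ := by
  obtain ⟨R, t⟩ := exists_tri hbase hcoroot
  obtain ⟨hirr, v, hv0, hvwt, hvk⟩ := hVμ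
  have hv : IsHW H (posPart H α) μ v := by
    refine ⟨hv0, hvwt, fun p hp => ?_⟩
    induction hp using Submodule.span_induction with
    | mem x hx =>
      obtain ⟨χ, hχ, hx⟩ := hx
      exact hvk χ hχ x hx
    | zero => exact zero_lie v
    | add x y _ _ hx hy => rw [add_lie, hx, hy, add_zero]
    | smul a x _ hx => rw [smul_lie, hx, smul_zero]
  have key : ∀ T ∈ maxTrivSubmodule ℂ L (L ⊗[ℂ] (Vμ ⊗[ℂ] Vμ)), T = 0 := fun T hT =>
    main_abstract t hirr hv hnotselfdual T
      (fun x => (LieModule.mem_maxTrivSubmodule ℂ L _ T).1 hT x)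
  constructor
  · rw [eq_bot_iff]
    rintro T ⟨hT, _⟩
    exact key T hT
  · rw [eq_bot_iff]
    rintro T ⟨hT, _⟩
    exact key T hT

end AdjPaper
end
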